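/- arXiv:1608.01359 — 2 statements merged into one kernel-verified Lean document; each statement's English description precedes it below -/
import Mathlib

section
/- Barrier lemma in the unit ball. For every integer n ≥ 2, reals 0 < λ ≤ Λ, exponent q > n, and K > 0, there exists a constant c₀ > 0 such that the following holds. Let b : B₁ → ℝ be continuous with b ≥ 0 and ‖b‖_{L^q(B₁)} ≤ K, and let v be continuous on the closed ball cl(B₁) and C² on B₁, with 𝓜⁻(D²v(x)) − b(x)|Dv(x)| = −1 for all x ∈ B₁ and v = 0 on ∂B₁. Then v(x) ≥ c₀·(1−|x|) for all x ∈ B₁. -/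
open MeasureTheory
open scoped ENNReal

/-- The Pucci minimal extremal operator `𝓜⁻(M)` with ellipticity constants `lam ≤ Lam`:
the infimum of `tr(A*M)` over symmetric matrices `A` with `lam•I ≤ A ≤ Lam•I`. -/
noncomputable def pucciMinus (n : ℕ) (lam Lam : ℝ) (M : Matrix (Fin n) (Fin n) ℝ) : ℝ :=
  sInf { t : ℝ | ∃ A : Matrix (Fin n) (Fin n) ℝ, A.IsSymm ∧
    (A - lam • (1 : Matrix (Fin n) (Fin n) ℝ)).PosSemidef ∧
    (Lam • (1 : Matrix (Fin n) (Fin n) ℝ) - A).PosSemidef ∧ t = (A * M).trace }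

/-- The Pucci maximal extremal operator `𝓜⁺(M)`. -/
noncomputable def pucciPlus (n : ℕ) (lam Lam : ℝ) (M : Matrix (Fin n) (Fin n) ℝ) : ℝ :=
  sSup { t : ℝ | ∃ A : Matrix (Fin n) (Fin n) ℝ, A.IsSymm ∧
    (A - lam • (1 : Matrix (Fin n) (Fin n) ℝ)).PosSemidef ∧
    (Lam • (1 : Matrix (Fin n) (Fin n) ℝ) - A).PosSemidef ∧ t = (A * M).trace }

/-- The Hessian matrix `D²u(x)` of `u` at `x`. -/
noncomputable def hess (n : ℕ) (u : EuclideanSpace ℝ (Fin n) → ℝ)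
    (x : EuclideanSpace ℝ (Fin n)) : Matrix (Fin n) (Fin n) ℝ :=
  fun i j => fderiv ℝ (fun y => fderiv ℝ u y (EuclideanSpace.single j (1 : ℝ))) x
    (EuclideanSpace.single i (1 : ℝ))

/-- The euclidean norm `|Du(x)|` of the gradient of `u` at `x`. -/
noncomputable def gradNorm (n : ℕ) (u : EuclideanSpace ℝ (Fin n) → ℝ)
    (x : EuclideanSpace ℝ (Fin n)) : ℝ := ‖fderiv ℝ u x‖

/-- The `L^p` norm `(∫_E |g|^p)^(1/p)`, as a Lebesgue integral valued in `[0,∞]`. -/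
noncomputable def LpNormE (n : ℕ) (p : ℝ) (g : EuclideanSpace ℝ (Fin n) → ℝ)
    (E : Set (EuclideanSpace ℝ (Fin n))) : ℝ≥0∞ :=
  (∫⁻ x in E, ENNReal.ofReal (|g x| ^ p)) ^ (1 / p)

/-- The last (`n`-th) coordinate `x_n` of a point of `ℝⁿ`. -/
def lastC (n : ℕ) (hn : 1 ≤ n) (x : EuclideanSpace ℝ (Fin n)) : ℝ := x ⟨n - 1, by omega⟩

/-- The open half-ball `B_R⁺ = {|x| < R, x_n > 0}`. -/
def halfBall (n : ℕ) (hn : 1 ≤ n) (R : ℝ) : Set (EuclideanSpace ℝ (Fin n)) :=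
  {x | ‖x‖ < R ∧ 0 < lastC n hn x}

/-- The flat boundary part `B_R⁰ = {|x| ≤ R, x_n = 0}`. -/
def flatB (n : ℕ) (hn : 1 ≤ n) (R : ℝ) : Set (EuclideanSpace ℝ (Fin n)) :=
  {x | ‖x‖ ≤ R ∧ lastC n hn x = 0}

/-- The norm `‖g‖_{L^{p,q}(B_R⁺)} = ‖g‖_{L^p(B_R⁺)} + ‖g‖_{L^q(B_R⁺ ∩ {x_n < d0})}`. -/
noncomputable def LpqNormHB (n : ℕ) (hn : 1 ≤ n) (p q d0 R : ℝ)
    (g : EuclideanSpace ℝ (Fin n) → ℝ) : ℝ≥0∞ :=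
  LpNormE n p g (halfBall n hn R) +
    LpNormE n q g {x ∈ halfBall n hn R | lastC n hn x < d0}

/-- The open cube `Q_ρ` of side `ρ` centered at `(0,…,0,ρ/2)`. -/
def cubeQ (n : ℕ) (hn : 1 ≤ n) (ρ : ℝ) : Set (EuclideanSpace ℝ (Fin n)) :=
  {x | (∀ i : Fin n, i.1 ≠ n - 1 → |x i| < ρ / 2) ∧ 0 < lastC n hn x ∧ lastC n hn x < ρ}

/-- The norm `‖g‖_{L^{p,q}(Q₂)} = ‖g‖_{L^p(Q₂)} + ‖g‖_{L^q(Q₂ ∩ {x_n < d0})}`. -/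
noncomputable def LpqNormQ (n : ℕ) (hn : 1 ≤ n) (p q d0 : ℝ)
    (g : EuclideanSpace ℝ (Fin n) → ℝ) : ℝ≥0∞ :=
  LpNormE n p g (cubeQ n hn 2) +
    LpNormE n q g {x ∈ cubeQ n hn 2 | lastC n hn x < d0}


open scoped MatrixOrder in
lemma aux_trace_mul_nonneg {n : ℕ} {A N : Matrix (Fin n) (Fin n) ℝ} (hA : A.PosSemidef)
    (hN : N.PosSemidef) : 0 ≤ (A * N).trace := by
  have h1 : CFC.sqrt N * CFC.sqrt N = N := CFC.sqrt_mul_sqrt_self N hN.nonneg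
  have h2 : (CFC.sqrt N).PosSemidef := Matrix.nonneg_iff_posSemidef.mp (CFC.sqrt_nonneg N)
  have h3 := (hA.mul_mul_conjTranspose_same (CFC.sqrt N)).trace_nonneg
  rw [h2.isHermitian.eq, Matrix.mul_assoc, Matrix.trace_mul_comm, Matrix.mul_assoc, h1] at h3
  exact h3

lemma aux_trace_lower {n : ℕ} {lam : ℝ} {A N : Matrix (Fin n) (Fin n) ℝ}
    (hA : (A - lam • (1 : Matrix (Fin n) (Fin n) ℝ)).PosSemidef)
    (hN : N.PosSemidef) : lam * N.trace ≤ (A * N).trace := by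
  have := aux_trace_mul_nonneg hA hN
  rw [Matrix.sub_mul, Matrix.trace_sub, Matrix.smul_mul, Matrix.one_mul, Matrix.trace_smul,
    smul_eq_mul] at this
  linarith

lemma aux_trace_upper {n : ℕ} {Lam : ℝ} {A : Matrix (Fin n) (Fin n) ℝ}
    (hA : (Lam • (1 : Matrix (Fin n) (Fin n) ℝ) - A).PosSemidef) : A.trace ≤ n * Lam := by
  have := hA.trace_nonneg
  rw [Matrix.trace_sub, Matrix.trace_smul, Matrix.trace_one, smul_eq_mul, Fintype.card_fin] at this
  linarith

lemma aux_det_le {n : ℕ} {N : Matrix (Fin n) (Fin n) ℝ} (hN : N.PosSemidef) :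
    N.det ≤ N.trace ^ n := by
  rw [hN.isHermitian.det_eq_prod_eigenvalues, hN.isHermitian.trace_eq_sum_eigenvalues]
  have h : ∀ i, 0 ≤ hN.isHermitian.eigenvalues i := hN.eigenvalues_nonneg
  simp only [RCLike.ofReal_real_eq_id, id]
  calc ∏ i, hN.isHermitian.eigenvalues i
      ≤ ∏ _i : Fin n, ∑ j, hN.isHermitian.eigenvalues j :=
        Finset.prod_le_prod (fun i _ => h i)
          (fun i _ => Finset.single_le_sum (fun j _ => h j) (Finset.mem_univ i))
    _ = _ := by simp

lemma aux_pucci_ge {n : ℕ} {lam Lam t : ℝ} (hLam : lam ≤ Lam) {M : Matrix (Fin n) (Fin n) ℝ}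
    (h : ∀ A : Matrix (Fin n) (Fin n) ℝ,
      (A - lam • (1 : Matrix (Fin n) (Fin n) ℝ)).PosSemidef →
      (Lam • (1 : Matrix (Fin n) (Fin n) ℝ) - A).PosSemidef → t ≤ (A * M).trace) :
    t ≤ pucciMinus n lam Lam M := by
  apply le_csInf
  · refine ⟨_, lam • 1, ?_, ?_, ?_, rfl⟩
    · simp [Matrix.IsSymm]
    · simpa using Matrix.PosSemidef.zero
    · rw [← sub_smul]
      exact Matrix.PosSemidef.one.smul (by linarith)
  · rintro _ ⟨A, -, h1, h2, rfl⟩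
    exact h A h1 h2

section calcu
variable {n : ℕ}

lemma aux_hess_eq {u : EuclideanSpace ℝ (Fin n) → ℝ} {x : EuclideanSpace ℝ (Fin n)}
    (hu : ContDiffAt ℝ 2 u x) (i j : Fin n) :
    hess n u x i j = fderiv ℝ (fderiv ℝ u) x (EuclideanSpace.single i 1)
      (EuclideanSpace.single j 1) := by
  have hd : DifferentiableAt ℝ (fderiv ℝ u) x :=
    (hu.fderiv_right (m := 1) (by norm_num)).differentiableAt (by norm_num)
  unfold hess
  rw [fderiv_clm_apply hd (differentiableAt_const _)]
  simp

lemma aux_hess_quad {u : EuclideanSpace ℝ (Fin n) → ℝ} {x : EuclideanSpace ℝ (Fin n)}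
    (hu : ContDiffAt ℝ 2 u x) (a : EuclideanSpace ℝ (Fin n)) :
    (a.ofLp ⬝ᵥ (hess n u x).mulVec a.ofLp) = fderiv ℝ (fderiv ℝ u) x a a := by
  have ha : a = ∑ i, a i • EuclideanSpace.single i (1:ℝ) := by
    ext k; simp [Pi.single_apply]
  conv_rhs => rw [ha]
  simp only [map_sum, map_smul, _root_.sum_apply, _root_.smul_apply,
    dotProduct, Matrix.mulVec, aux_hess_eq hu, smul_eq_mul, Finset.mul_sum]
  rw [Finset.sum_comm]
  refine Finset.sum_congr rfl fun i _ => Finset.sum_congr rfl fun j _ => by ring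

lemma aux_hess_symm {u : EuclideanSpace ℝ (Fin n) → ℝ} {x : EuclideanSpace ℝ (Fin n)}
    (hu : ContDiffAt ℝ 2 u x) : (hess n u x).IsHermitian := by
  ext i j
  simp only [Matrix.conjTranspose_apply, star_trivial]
  rw [aux_hess_eq hu, aux_hess_eq hu]
  exact (hu.isSymmSndFDerivAt (by simp)) _ _

lemma aux_hess_min {u : EuclideanSpace ℝ (Fin n) → ℝ} {x : EuclideanSpace ℝ (Fin n)}
    (hu : ContDiffAt ℝ 2 u x) (hmin : IsLocalMin u x) : (hess n u x).PosSemidef := by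
  refine Matrix.PosSemidef.of_dotProduct_mulVec_nonneg (aux_hess_symm hu) fun a => ?_
  have hq := aux_hess_quad hu (WithLp.toLp 2 a)
  simp only [star_trivial]
  simp only at hq
  rw [hq]
  set A : EuclideanSpace ℝ (Fin n) := WithLp.toLp 2 a
  by_contra hneg
  push Not at hneg
  set l : ℝ → EuclideanSpace ℝ (Fin n) := fun t => x + t • A with hl
  have hl0 : l 0 = x := by simp [hl]
  have hld : ∀ t, HasDerivAt l A t := fun t => by
    have := ((hasDerivAt_id t).smul_const A).const_add x
    rw [one_smul] at this
    exact this
  have hlc : Filter.Tendsto l (nhds 0) (nhds x) := by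
    have := (hld 0).continuousAt.tendsto
    rwa [hl0] at this
  have hev : ∀ᶠ y in nhds x, DifferentiableAt ℝ u y := by
    filter_upwards [hu.eventually (by simp)] with y hy using hy.differentiableAt (by norm_num)
  have hd1 : deriv (fun t => u (l t)) =ᶠ[nhds 0] fun t => fderiv ℝ u (l t) A := by
    filter_upwards [hlc.eventually hev] with t ht
    exact (ht.hasFDerivAt.comp_hasDerivAt t (hld t)).deriv
  have hdd : DifferentiableAt ℝ (fderiv ℝ u) x :=
    (hu.fderiv_right (m := 1) (by norm_num)).differentiableAt (by norm_num)
  have hd2 : deriv (deriv (fun t => u (l t))) 0 = fderiv ℝ (fderiv ℝ u) x A A := by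
    rw [hd1.deriv_eq]
    have h1 : HasDerivAt (fun t => fderiv ℝ u (l t)) (fderiv ℝ (fderiv ℝ u) x A) 0 := by
      have h := hdd.hasFDerivAt
      rw [← hl0] at h
      have := h.comp_hasDerivAt 0 (hld 0)
      rwa [hl0] at this
    have h2 := h1.clm_apply (hasDerivAt_const (0:ℝ) A)
    simpa using h2.deriv
  have hlm : IsLocalMin (fun t => u (l t)) 0 := by
    have := hlc.eventually hmin
    filter_upwards [this] with t ht
    simpa [hl0] using ht
  have hc : ContinuousAt (fun t => u (l t)) 0 := by
    have h1 : ContinuousAt u (l 0) := by rw [hl0]; exact hu.continuousAt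
    exact ContinuousAt.comp h1 (hld 0).continuousAt
  have hmax := isLocalMax_of_deriv_deriv_neg (f := fun t => u (l t)) (x₀ := 0)
    (by rw [hd2]; exact hneg) hlm.deriv_eq_zero hc
  have hconst : (fun t => u (l t)) =ᶠ[nhds 0] fun _ => u (l 0) := by
    filter_upwards [hlm, hmax] with t h1 h2 using le_antisymm h2 h1
  have h3 : deriv (fun t => u (l t)) =ᶠ[nhds 0] deriv (fun _ => u (l 0)) := hconst.deriv
  have h4 := h3.deriv_eq
  rw [hd2] at h4
  simp at h4
  linarith

lemma aux_hess_sub {u w : EuclideanSpace ℝ (Fin n) → ℝ} {x : EuclideanSpace ℝ (Fin n)}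
    (hu : ContDiffAt ℝ 2 u x) (hw : ContDiffAt ℝ 2 w x) :
    hess n (fun y => u y - w y) x = hess n u x - hess n w x := by
  have e1 : ∀ᶠ y in nhds x, DifferentiableAt ℝ u y := by
    filter_upwards [hu.eventually (by simp)] with y hy using hy.differentiableAt (by norm_num)
  have e2 : ∀ᶠ y in nhds x, DifferentiableAt ℝ w y := by
    filter_upwards [hw.eventually (by simp)] with y hy using hy.differentiableAt (by norm_num)
  have e3 : fderiv ℝ (fun y => u y - w y) =ᶠ[nhds x] fun y => fderiv ℝ u y - fderiv ℝ w y := by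
    filter_upwards [e1, e2] with y h1 h2 using fderiv_fun_sub h1 h2
  have hdu : DifferentiableAt ℝ (fderiv ℝ u) x :=
    (hu.fderiv_right (m := 1) (by norm_num)).differentiableAt (by norm_num)
  have hdw : DifferentiableAt ℝ (fderiv ℝ w) x :=
    (hw.fderiv_right (m := 1) (by norm_num)).differentiableAt (by norm_num)
  ext i j
  rw [Matrix.sub_apply, aux_hess_eq (hu.sub hw), aux_hess_eq hu, aux_hess_eq hw, e3.fderiv_eq,
    fderiv_fun_sub hdu hdw]
  simp

lemma aux_hess_inner (p x : EuclideanSpace ℝ (Fin n)) :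
    hess n (fun y => inner ℝ p y) x = 0 := by
  ext i j
  have : (fun y : EuclideanSpace ℝ (Fin n) => fderiv ℝ (fun y => inner ℝ p y) y
      (EuclideanSpace.single j (1:ℝ))) = fun _ => inner ℝ p (EuclideanSpace.single j (1:ℝ)) := by
    ext y
    have : HasFDerivAt (fun y => inner ℝ p y) (innerSL ℝ p) y := (innerSL ℝ p).hasFDerivAt
    rw [this.fderiv]; rfl
  unfold hess
  rw [this]
  simp

/-- The (negative of the) gradient map, in coordinates, and its derivative. -/
lemma aux_grad_deriv {u : EuclideanSpace ℝ (Fin n) → ℝ} {x : EuclideanSpace ℝ (Fin n)}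
    (hu : ContDiffAt ℝ 2 u x) :
    HasFDerivAt (fun y => WithLp.toLp 2 (fun j => fderiv ℝ u y (EuclideanSpace.single j (1:ℝ))) :
      EuclideanSpace ℝ (Fin n) → EuclideanSpace ℝ (Fin n))
      (Matrix.toEuclideanCLM (n := Fin n) (𝕜 := ℝ) (hess n u x).transpose) x := by
  have hd : DifferentiableAt ℝ (fderiv ℝ u) x :=
    (hu.fderiv_right (m := 1) (by norm_num)).differentiableAt (by norm_num)
  rw [← hasFDerivWithinAt_univ, hasFDerivWithinAt_euclidean]
  intro j
  rw [hasFDerivWithinAt_univ]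
  have h1 : DifferentiableAt ℝ (fun y => fderiv ℝ u y (EuclideanSpace.single j (1:ℝ))) x :=
    hd.clm_apply (differentiableAt_const _)
  refine h1.hasFDerivAt.congr_fderiv ?_
  apply ContinuousLinearMap.coe_injective
  apply (EuclideanSpace.basisFun (Fin n) ℝ).toBasis.ext
  intro i
  simp [hess, Matrix.ofLp_toEuclideanCLM]

lemma aux_det_toEuclideanCLM (M : Matrix (Fin n) (Fin n) ℝ) :
    (Matrix.toEuclideanCLM (n := Fin n) (𝕜 := ℝ) M).det = M.det := by
  have : (Matrix.toEuclideanCLM (n := Fin n) (𝕜 := ℝ) M : EuclideanSpace ℝ (Fin n) →ₗ[ℝ] _)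
      = Matrix.toLpLin 2 2 M := rfl
  rw [ContinuousLinearMap.det, this, LinearMap.det_toLpLin]

end calcu

section abp
variable {n : ℕ}

lemma aux_contact {Ω : Set (EuclideanSpace ℝ (Fin n))} (hΩ : IsOpen Ω)
    {x0 : EuclideanSpace ℝ (Fin n)} {R δ : ℝ} (hR : 0 < R) (hx0 : x0 ∈ Ω)
    (hΩR : Ω ⊆ Metric.closedBall x0 R)
    {u : EuclideanSpace ℝ (Fin n) → ℝ} (hu : ContinuousOn u (closure Ω))
    (hbd : ∀ x ∈ frontier Ω, 0 ≤ u x) (hδ : u x0 ≤ - (δ * R))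
    {p : EuclideanSpace ℝ (Fin n)} (hp : ‖p‖ < δ) :
    ∃ x ∈ Ω, IsLocalMin (fun y => u y - inner ℝ p y) x := by
  have hcl : closure Ω ⊆ Metric.closedBall x0 R := closure_minimal hΩR Metric.isClosed_closedBall
  have hcomp : IsCompact (closure Ω) :=
    (isCompact_closedBall x0 R).of_isClosed_subset isClosed_closure hcl
  have hg : ContinuousOn (fun y => u y - inner ℝ p y) (closure Ω) :=
    hu.sub (by fun_prop)
  obtain ⟨x, hx, hmin⟩ := hcomp.exists_isMinOn ⟨x0, subset_closure hx0⟩ hg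
  have hx0' := hmin (subset_closure hx0)
  simp only [Set.mem_ofPred_eq] at hx0'
  have hxΩ : x ∈ Ω := by
    by_contra hnot
    have hfr : x ∈ frontier Ω := by
      rw [hΩ.frontier_eq]; exact ⟨hx, hnot⟩
    have h1 := hbd x hfr
    have h2 : |inner ℝ p (x - x0)| ≤ ‖p‖ * ‖x - x0‖ := abs_real_inner_le_norm _ _
    have h3 : ‖x - x0‖ ≤ R := by simpa [dist_eq_norm] using hcl hx
    have h4 : ‖p‖ * ‖x - x0‖ ≤ ‖p‖ * R := by gcongr
    have h5 : ‖p‖ * R < δ * R := by gcongr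
    rw [inner_sub_right] at h2
    have := (abs_le.mp h2).2
    linarith
  exact ⟨x, hxΩ, (hmin.on_subset subset_closure).isLocalMin (hΩ.mem_nhds hxΩ)⟩

lemma aux_abp {lam Lam : ℝ} (hlam : 0 < lam) (hLam : lam ≤ Lam)
    {b v φ : EuclideanSpace ℝ (Fin n) → ℝ}
    (hbc : ContinuousOn b (Metric.ball 0 1))
    (hb0 : ∀ x ∈ Metric.ball (0 : EuclideanSpace ℝ (Fin n)) 1, 0 ≤ b x)
    (hvc : ContinuousOn v (Metric.closedBall 0 1))
    (hv2 : ContDiffOn ℝ 2 v (Metric.ball 0 1))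
    (heq : ∀ x ∈ Metric.ball (0 : EuclideanSpace ℝ (Fin n)) 1,
          pucciMinus n lam Lam (hess n v x) - b x * gradNorm n v x = -1)
    {Ω : Set (EuclideanSpace ℝ (Fin n))} (hΩ : IsOpen Ω) (hΩ1 : Ω ⊆ Metric.ball 0 1)
    {x0 : EuclideanSpace ℝ (Fin n)} {R δ L : ℝ} (hR : 0 < R) (hx0 : x0 ∈ Ω)
    (hΩR : Ω ⊆ Metric.closedBall x0 R)
    (hφ : ContDiff ℝ 2 φ) (hL0 : 0 ≤ L) (hL : ∀ x ∈ Ω, ‖fderiv ℝ φ x‖ ≤ L)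
    (hφA : ∀ x ∈ Ω, ∀ A : Matrix (Fin n) (Fin n) ℝ,
      (A - lam • (1 : Matrix (Fin n) (Fin n) ℝ)).PosSemidef →
      (Lam • (1 : Matrix (Fin n) (Fin n) ℝ) - A).PosSemidef → -1 ≤ (A * hess n φ x).trace)
    (hbd : ∀ x ∈ frontier Ω, φ x ≤ v x) (hδ0 : 0 < δ) (hδ : δ * R ≤ φ x0 - v x0) :
    volume (Metric.ball (0 : EuclideanSpace ℝ (Fin n)) δ) ≤
      ENNReal.ofReal (((L + δ) / lam) ^ n) * ∫⁻ x in Ω, ENNReal.ofReal (b x ^ n) := by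
  set u : EuclideanSpace ℝ (Fin n) → ℝ := fun y => v y - φ y with hu_def
  have hv2' : ∀ x ∈ Ω, ContDiffAt ℝ 2 v x := fun x hx =>
    hv2.contDiffAt (Metric.isOpen_ball.mem_nhds (hΩ1 hx))
  have hu2 : ∀ x ∈ Ω, ContDiffAt ℝ 2 u x := fun x hx => (hv2' x hx).sub hφ.contDiffAt
  have hu2on : ContDiffOn ℝ 2 u Ω := fun x hx => (hu2 x hx).contDiffWithinAt
  have hclos : closure Ω ⊆ Metric.closedBall 0 1 :=
    closure_minimal (hΩ1.trans Metric.ball_subset_closedBall) Metric.isClosed_closedBall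
  have huc : ContinuousOn u (closure Ω) :=
    (hvc.mono hclos).sub hφ.continuous.continuousOn
  set F : EuclideanSpace ℝ (Fin n) → EuclideanSpace ℝ (Fin n) :=
    fun y => WithLp.toLp 2 (fun j => fderiv ℝ u y (EuclideanSpace.single j (1:ℝ))) with hF
  set S : Set (EuclideanSpace ℝ (Fin n)) :=
    {x ∈ Ω | |(hess n u x).det| ≤ (b x * ((L + δ) / lam)) ^ n} with hS
  have hSΩ : S ⊆ Ω := fun x hx => hx.1
  have hdetc : ContinuousOn (fun x => (hess n u x).det) Ω := by
    have h1 : ContinuousOn (fderiv ℝ u) Ω :=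
      hu2on.continuousOn_fderiv_of_isOpen hΩ (by norm_num)
    have h1' : ContDiffOn ℝ 1 (fderiv ℝ u) Ω := hu2on.fderiv_of_isOpen hΩ (by norm_num)
    have h2 : ContinuousOn (fderiv ℝ (fderiv ℝ u)) Ω :=
      h1'.continuousOn_fderiv_of_isOpen hΩ (by norm_num)
    have h3 : ContinuousOn (fun x => hess n u x) Ω := by
      refine continuousOn_pi.mpr fun i => continuousOn_pi.mpr fun j => ?_
      refine ContinuousOn.congr (f := fun x => fderiv ℝ (fderiv ℝ u) x (EuclideanSpace.single i 1)
        (EuclideanSpace.single j 1)) ?_ (fun x hx => aux_hess_eq (hu2 x hx) i j)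
      exact (h2.clm_apply continuousOn_const).clm_apply continuousOn_const
    exact (Continuous.matrix_det continuous_id).comp_continuousOn h3
  have hSm : MeasurableSet S := by
    have hc : ContinuousOn (fun x => (b x * ((L + δ) / lam)) ^ n - |(hess n u x).det|) Ω :=
      (((hbc.mono hΩ1).mul continuousOn_const).pow n).sub hdetc.abs
    obtain ⟨t, ht, hte⟩ := continuousOn_iff_isClosed.mp hc (Set.Ici 0) isClosed_Ici
    have : S = t ∩ Ω := by
      rw [← hte]
      ext x
      simp only [hS, Set.mem_ofPred_eq, Set.mem_inter_iff, Set.mem_preimage, Set.mem_Ici, sub_nonneg]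
      tauto
    rw [this]
    exact ht.measurableSet.inter hΩ.measurableSet
  have hcover : Metric.ball (0 : EuclideanSpace ℝ (Fin n)) δ ⊆ F '' S := by
    intro p hp
    have hp' : ‖p‖ < δ := by simpa using hp
    obtain ⟨x, hx, hmin⟩ := aux_contact hΩ hR hx0 hΩR huc
      (fun y hy => sub_nonneg.mpr (hbd y hy)) (by simp only [hu_def]; linarith) hp'
    have hi : ContDiffAt ℝ 2 (fun y : EuclideanSpace ℝ (Fin n) => inner ℝ p y) x :=
      (innerSL ℝ p).contDiff.contDiffAt
    have hid : HasFDerivAt (fun y => inner ℝ p y) (innerSL ℝ p) x := (innerSL ℝ p).hasFDerivAt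
    have hpsd := aux_hess_min ((hu2 x hx).sub hi) hmin
    rw [aux_hess_sub (hu2 x hx) hi, aux_hess_inner, sub_zero] at hpsd
    have hdu : DifferentiableAt ℝ u x := (hu2 x hx).differentiableAt (by norm_num)
    have hfu : fderiv ℝ u x = innerSL ℝ p := by
      have h := hmin.fderiv_eq_zero
      rw [fderiv_fun_sub hdu hid.differentiableAt, hid.fderiv, sub_eq_zero] at h
      exact h
    refine ⟨x, ⟨hx, ?_⟩, ?_⟩
    · have hdv : DifferentiableAt ℝ v x := (hv2' x hx).differentiableAt (by norm_num)
      have hdφ : DifferentiableAt ℝ φ x := hφ.contDiffAt.differentiableAt (by norm_num)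
      have hfv : fderiv ℝ v x = innerSL ℝ p + fderiv ℝ φ x := by
        rw [← hfu, hu_def, fderiv_fun_sub hdv hdφ]; abel
      have hgn : gradNorm n v x ≤ L + δ := by
        unfold gradNorm
        rw [hfv]
        refine (norm_add_le _ _).trans ?_
        rw [innerSL_apply_norm]
        linarith [hL x hx]
      have hhv : hess n v x = hess n u x + hess n φ x := by
        rw [hu_def, aux_hess_sub (hv2' x hx) hφ.contDiffAt]; abel
      have hpu : -1 + lam * (hess n u x).trace ≤ pucciMinus n lam Lam (hess n v x) := by
        refine aux_pucci_ge hLam fun A h1 h2 => ?_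
        rw [hhv, Matrix.mul_add, Matrix.trace_add]
        linarith [hφA x hx A h1 h2, aux_trace_lower h1 hpsd]
      have hb := hb0 x (hΩ1 hx)
      have h5 : b x * gradNorm n v x ≤ b x * (L + δ) := by gcongr
      have h6 := heq x (hΩ1 hx)
      have h7 : (hess n u x).trace ≤ b x * ((L + δ) / lam) := by
        rw [← mul_div_assoc, le_div_iff₀ hlam]
        linarith
      rw [abs_of_nonneg hpsd.det_nonneg]
      refine (aux_det_le hpsd).trans ?_
      have := hpsd.trace_nonneg
      gcongr
    · ext j
      simp [hF, hfu, EuclideanSpace.inner_single_right]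
  calc volume (Metric.ball (0 : EuclideanSpace ℝ (Fin n)) δ) ≤ volume (F '' S) :=
        measure_mono hcover
    _ ≤ ∫⁻ x in S, ENNReal.ofReal
          |(Matrix.toEuclideanCLM (n := Fin n) (𝕜 := ℝ) (hess n u x).transpose).det| :=
        addHaar_image_le_lintegral_abs_det_fderiv volume hSm
          (fun x hx => (aux_grad_deriv (hu2 x hx.1)).hasFDerivWithinAt)
    _ ≤ ∫⁻ x in S, ENNReal.ofReal (((L + δ) / lam) ^ n) * ENNReal.ofReal (b x ^ n) := by
        refine setLIntegral_mono_ae' hSm (Filter.Eventually.of_forall fun x hx => ?_)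
        rw [aux_det_toEuclideanCLM, Matrix.det_transpose, ← ENNReal.ofReal_mul (by positivity)]
        apply ENNReal.ofReal_le_ofReal
        refine hx.2.trans (le_of_eq ?_)
        rw [mul_pow, mul_comm]
    _ = ENNReal.ofReal (((L + δ) / lam) ^ n) * ∫⁻ x in S, ENNReal.ofReal (b x ^ n) :=
        lintegral_const_mul' _ _ ENNReal.ofReal_ne_top
    _ ≤ _ := by
        gcongr

end abp

section holder
variable {n : ℕ}

lemma aux_holder (hn : 1 ≤ n) {q K : ℝ} (hq : (n : ℝ) < q) (hK : 0 < K)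
    {b : EuclideanSpace ℝ (Fin n) → ℝ}
    (hbc : ContinuousOn b (Metric.ball 0 1))
    (hb0 : ∀ x ∈ Metric.ball (0 : EuclideanSpace ℝ (Fin n)) 1, 0 ≤ b x)
    (hbK : LpNormE n q b (Metric.ball 0 1) ≤ ENNReal.ofReal K)
    {Ω : Set (EuclideanSpace ℝ (Fin n))} (hΩ : IsOpen Ω) (hΩ1 : Ω ⊆ Metric.ball 0 1) :
    ∫⁻ x in Ω, ENNReal.ofReal (b x ^ n) ≤
      ENNReal.ofReal K ^ (n : ℝ) * volume Ω ^ (1 - n / q) := by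
  have hn0 : (0:ℝ) < n := by exact_mod_cast hn
  have hq0 : 0 < q := hn0.trans hq
  have hα : 0 < 1 - n / q := by
    rw [sub_pos, div_lt_one hq0]; exact hq
  have hconj : (q / n).HolderConjugate (1 / (1 - n / q)) := by
    rw [Real.holderConjugate_iff]
    refine ⟨by rw [lt_div_iff₀ hn0]; linarith, ?_⟩
    rw [inv_div, one_div, inv_inv]; ring
  have hm : AEMeasurable (fun x => ENNReal.ofReal (b x ^ n)) (volume.restrict Ω) :=
    ENNReal.measurable_ofReal.comp_aemeasurable
      (((hbc.mono hΩ1).pow n).aemeasurable hΩ.measurableSet)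
  have h := ENNReal.lintegral_mul_le_Lp_mul_Lq (volume.restrict Ω) hconj hm
    (aemeasurable_const (b := (1:ℝ≥0∞)))
  simp only [Pi.mul_apply, mul_one, ENNReal.one_rpow, lintegral_const, one_mul,
    Measure.restrict_apply MeasurableSet.univ, Set.univ_inter, one_div_one_div] at h
  refine h.trans ?_
  gcongr
  have e1 : ∫⁻ x in Ω, ENNReal.ofReal (b x ^ n) ^ (q / n) =
      ∫⁻ x in Ω, ENNReal.ofReal (|b x| ^ q) := by
    refine setLIntegral_congr_fun hΩ.measurableSet fun x hx => ?_
    have hb := hb0 x (hΩ1 hx)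
    rw [ENNReal.ofReal_rpow_of_nonneg (by positivity) (by positivity), abs_of_nonneg hb,
      ← Real.rpow_natCast, ← Real.rpow_mul hb]
    congr 2
    field_simp
  rw [e1]
  have e2 : (1 / (q / n) : ℝ) = (1 / q) * n := by field_simp
  rw [e2, ENNReal.rpow_mul]
  refine ENNReal.rpow_le_rpow (le_trans ?_ hbK) hn0.le
  unfold LpNormE
  gcongr

lemma aux_key (hn : 1 ≤ n) {lam Lam : ℝ} (hlam : 0 < lam) (hLam : lam ≤ Lam)
    {q K : ℝ} (hq : (n : ℝ) < q) (hK : 0 < K) :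
    ∃ C : ℝ, 0 < C ∧ ∀ (b v φ : EuclideanSpace ℝ (Fin n) → ℝ),
    ContinuousOn b (Metric.ball 0 1) →
    (∀ x ∈ Metric.ball (0 : EuclideanSpace ℝ (Fin n)) 1, 0 ≤ b x) →
    LpNormE n q b (Metric.ball 0 1) ≤ ENNReal.ofReal K →
    ContinuousOn v (Metric.closedBall 0 1) →
    ContDiffOn ℝ 2 v (Metric.ball 0 1) →
    (∀ x ∈ Metric.ball (0 : EuclideanSpace ℝ (Fin n)) 1,
          pucciMinus n lam Lam (hess n v x) - b x * gradNorm n v x = -1) →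
    ∀ (Ω : Set (EuclideanSpace ℝ (Fin n))), IsOpen Ω → Ω ⊆ Metric.ball 0 1 →
    ∀ (x0 : EuclideanSpace ℝ (Fin n)) (R L : ℝ), 0 < R → x0 ∈ Ω →
    Ω ⊆ Metric.closedBall x0 R →
    ContDiff ℝ 2 φ → 0 ≤ L → (∀ x ∈ Ω, ‖fderiv ℝ φ x‖ ≤ L) →
    (∀ x ∈ Ω, ∀ A : Matrix (Fin n) (Fin n) ℝ,
      (A - lam • (1 : Matrix (Fin n) (Fin n) ℝ)).PosSemidef →
      (Lam • (1 : Matrix (Fin n) (Fin n) ℝ) - A).PosSemidef → -1 ≤ (A * hess n φ x).trace) →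
    (∀ x ∈ frontier Ω, φ x ≤ v x) →
    C * R ^ (1 - n / q) ≤ 1 →
    φ x0 - v x0 ≤ C * L * R * R ^ (1 - n / q) := by
  have : Nonempty (Fin n) := ⟨⟨0, hn⟩⟩
  have hn0 : (0:ℝ) < n := by exact_mod_cast hn
  have hnn : n ≠ 0 := by omega
  set α : ℝ := 1 - n / q with hα_def
  set ω : ℝ := (volume (Metric.ball (0 : EuclideanSpace ℝ (Fin n)) 1)).toReal with hω
  have hωtop : volume (Metric.ball (0 : EuclideanSpace ℝ (Fin n)) 1) ≠ ⊤ :=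
    measure_ball_lt_top.ne
  have hω0 : 0 < ω := ENNReal.toReal_pos (Metric.measure_ball_pos _ _ one_pos).ne' hωtop
  have hωe : volume (Metric.ball (0 : EuclideanSpace ℝ (Fin n)) 1) = ENNReal.ofReal ω :=
    (ENNReal.ofReal_toReal hωtop).symm
  set C : ℝ := K * ω ^ ((α - 1) / n) / lam with hC
  have hC0 : 0 < C := by positivity
  refine ⟨2 * C, by positivity, ?_⟩
  intro b v φ hbc hb0 hbK hvc hv2 heq Ω hΩ hΩ1 x0 R L hR hx0 hΩR hφ hL0 hL hφA hbd hsmall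
  by_contra hcon
  push Not at hcon
  set w : ℝ := φ x0 - v x0 with hw
  have hw0 : 0 < w := lt_of_le_of_lt (by positivity) hcon
  set δ : ℝ := w / R with hδ
  have hδ0 : 0 < δ := by positivity
  have hα : 0 < α := by
    have hq0 : 0 < q := hn0.trans hq
    rw [hα_def, sub_pos, div_lt_one hq0]; exact hq
  have habp := aux_abp hlam hLam hbc hb0 hvc hv2 heq hΩ hΩ1 hR hx0 hΩR hφ hL0 hL hφA hbd hδ0
    (le_of_eq (by rw [hδ, div_mul_cancel₀ _ hR.ne']))
  have hhol := aux_holder hn hq hK hbc hb0 hbK hΩ hΩ1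
  have hvolΩ : volume Ω ≤ ENNReal.ofReal (R ^ n * ω) := by
    refine (measure_mono hΩR).trans (le_of_eq ?_)
    rw [Measure.addHaar_closedBall _ _ hR.le, hωe, finrank_euclideanSpace, Fintype.card_fin,
      ENNReal.ofReal_mul (by positivity)]
  have hvolδ : volume (Metric.ball (0 : EuclideanSpace ℝ (Fin n)) δ) =
      ENNReal.ofReal (δ ^ n * ω) := by
    rw [Measure.addHaar_ball _ _ hδ0.le, hωe, finrank_euclideanSpace, Fintype.card_fin,
      ENNReal.ofReal_mul (by positivity)]
  have hmain : ENNReal.ofReal (δ ^ n * ω) ≤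
      ENNReal.ofReal (((L + δ) / lam) ^ n * (K ^ n * (R ^ n * ω) ^ α)) := by
    rw [← hvolδ]
    refine habp.trans ?_
    rw [ENNReal.ofReal_mul (by positivity)]
    gcongr
    refine hhol.trans ?_
    rw [ENNReal.ofReal_mul (by positivity), ENNReal.rpow_natCast, ENNReal.ofReal_pow hK.le,
      ← ENNReal.ofReal_rpow_of_nonneg (by positivity) hα.le]
    gcongr
  rw [ENNReal.ofReal_le_ofReal_iff (by positivity)] at hmain
  have hpow : δ ^ n ≤ ((L + δ) * (C * R ^ α)) ^ n := by
    have e1 : ((L + δ) * (C * R ^ α)) ^ n =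
        (((L + δ) / lam) ^ n * (K ^ n * (R ^ n * ω) ^ α)) / ω := by
      have e2 : (ω ^ ((α - 1) / n)) ^ n = ω ^ α / ω := by
        rw [← Real.rpow_natCast, ← Real.rpow_mul hω0.le, div_mul_cancel₀ _ hn0.ne',
          Real.rpow_sub_one hω0.ne']
      have e3 : (R ^ n) ^ α = (R ^ α) ^ n := by
        rw [← Real.rpow_natCast, ← Real.rpow_mul hR.le, ← Real.rpow_natCast,
          ← Real.rpow_mul hR.le, mul_comm]
      rw [Real.mul_rpow (by positivity) hω0.le, e3, hC, mul_pow, mul_pow, div_pow, mul_pow, e2,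
        div_pow]
      ring
    rw [e1, le_div_iff₀ hω0]
    exact hmain
  have hlin : δ ≤ (L + δ) * (C * R ^ α) := le_of_pow_le_pow_left₀ hnn (by positivity) hpow
  have h1 : δ * (C * R ^ α) ≤ δ * (1 / 2) := by
    gcongr
    linarith
  have h2 : δ ≤ 2 * C * L * R ^ α := by linarith
  have h3 : w = δ * R := by rw [hδ]; field_simp
  have h4 : δ * R ≤ 2 * C * L * R ^ α * R := by gcongr
  linarith
end holder

section testfun
variable {n : ℕ}

/-- Explicit polynomial test function. -/
noncomputable def auxPhi (k a A B : ℝ) (x0 x : EuclideanSpace ℝ (Fin n)) : ℝ :=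
  k + a * (1 - ‖x‖ ^ 2) + A * (1 - ‖x‖ ^ 2) ^ 2 - B * ‖x - x0‖ ^ 2

lemma auxPhi_contDiff (k a A B : ℝ) (x0 : EuclideanSpace ℝ (Fin n)) :
    ContDiff ℝ 2 (auxPhi k a A B x0) := by
  have h1 : ContDiff ℝ 2 (fun x : EuclideanSpace ℝ (Fin n) => ‖x‖ ^ 2) := contDiff_norm_sq ℝ
  have h2 : ContDiff ℝ 2 (fun x : EuclideanSpace ℝ (Fin n) => ‖x - x0‖ ^ 2) :=
    (contDiff_id.sub contDiff_const).norm_sq ℝ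
  unfold auxPhi
  fun_prop

lemma auxPhi_hasFDerivAt (k a A B : ℝ) (x0 x : EuclideanSpace ℝ (Fin n)) :
    HasFDerivAt (auxPhi k a A B x0)
      (innerSL ℝ ((-(2 * a + 4 * A * (1 - ‖x‖ ^ 2))) • x - (2 * B) • (x - x0))) x := by
  have h1 : HasFDerivAt (fun x : EuclideanSpace ℝ (Fin n) => ‖x‖ ^ 2) (2 • innerSL ℝ x) x :=
    (hasStrictFDerivAt_norm_sq x).hasFDerivAt
  have h2 : HasFDerivAt (fun x : EuclideanSpace ℝ (Fin n) => ‖x - x0‖ ^ 2)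
      (2 • innerSL ℝ (x - x0)) x := by
    have := (hasStrictFDerivAt_norm_sq (x - x0)).hasFDerivAt.comp x
      ((hasFDerivAt_id x).sub_const x0)
    rw [ContinuousLinearMap.comp_id] at this
    exact this
  have h3 := h1.const_sub 1
  have h4 := (((h3.const_mul a).const_add k).add ((h3.pow 2).const_mul A)).sub (h2.const_mul B)
  refine (h4.congr_fderiv ?_).congr_of_eventuallyEq (Filter.Eventually.of_forall fun y => ?_)
  · ext y
    simp
    ring
  · simp [auxPhi]

lemma auxPhi_norm_le {k a A B : ℝ} (ha : 0 ≤ a) (hA : 0 ≤ A) (hB : 0 ≤ B)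
    {x0 x : EuclideanSpace ℝ (Fin n)} (hx : ‖x‖ ≤ 1) :
    ‖fderiv ℝ (auxPhi k a A B x0) x‖ ≤
      2 * a + 4 * A * (1 - ‖x‖ ^ 2) + 2 * B * ‖x - x0‖ := by
  rw [(auxPhi_hasFDerivAt k a A B x0 x).fderiv, innerSL_apply_norm]
  refine (norm_sub_le _ _).trans ?_
  have hu : 0 ≤ 1 - ‖x‖ ^ 2 := by nlinarith [norm_nonneg x]
  rw [norm_smul, norm_smul, norm_neg, Real.norm_of_nonneg (by positivity),
    Real.norm_of_nonneg (by positivity)]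
  have : (2 * a + 4 * A * (1 - ‖x‖ ^ 2)) * ‖x‖ ≤ (2 * a + 4 * A * (1 - ‖x‖ ^ 2)) * 1 := by
    gcongr
  linarith

lemma auxPhi_hess (k a A B : ℝ) (x0 x : EuclideanSpace ℝ (Fin n)) :
    hess n (auxPhi k a A B x0) x = (8 * A) • Matrix.vecMulVec x.ofLp x.ofLp -
      (2 * a + 4 * A * (1 - ‖x‖ ^ 2) + 2 * B) • (1 : Matrix (Fin n) (Fin n) ℝ) := by
  ext i j
  have e : (fun y : EuclideanSpace ℝ (Fin n) => fderiv ℝ (auxPhi k a A B x0) y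
      (EuclideanSpace.single j (1:ℝ))) =
      fun y => (-(2 * a + 4 * A * (1 - ‖y‖ ^ 2))) * y j - (2 * B) * (y j - x0 j) := by
    ext y
    rw [(auxPhi_hasFDerivAt k a A B x0 y).fderiv]
    simp [EuclideanSpace.inner_single_right]
  unfold hess
  rw [e]
  have h1 : HasFDerivAt (fun x : EuclideanSpace ℝ (Fin n) => ‖x‖ ^ 2) (2 • innerSL ℝ x) x :=
    (hasStrictFDerivAt_norm_sq x).hasFDerivAt
  have h2 : HasFDerivAt (fun y : EuclideanSpace ℝ (Fin n) => y j)
      (EuclideanSpace.proj j : EuclideanSpace ℝ (Fin n) →L[ℝ] ℝ) x :=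
    (EuclideanSpace.proj j : EuclideanSpace ℝ (Fin n) →L[ℝ] ℝ).hasFDerivAt
  have h3 := (((((h1.const_sub 1).const_mul (4 * A)).const_add (2 * a)).neg).mul h2).sub
    ((h2.sub_const (x0 j)).const_mul (2 * B))
  have h4 := h3.fderiv
  refine (congrArg (fun T => T (EuclideanSpace.single i (1:ℝ))) h4).trans ?_
  simp [EuclideanSpace.inner_single_right, Matrix.vecMulVec_apply, Matrix.one_apply]
  by_cases hij : i = j
  · subst hij; simp; ring
  · have hji : ¬ j = i := fun h => hij h.symm
    simp [hij, hji]; ring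

lemma auxPhi_trace_ge {k a A B lam Lam : ℝ} (ha : 0 ≤ a) (hA : 0 ≤ A) (hB : 0 ≤ B)
    {x0 x : EuclideanSpace ℝ (Fin n)} (hx : ‖x‖ ≤ 1) {T : Matrix (Fin n) (Fin n) ℝ}
    (h1 : (T - lam • (1 : Matrix (Fin n) (Fin n) ℝ)).PosSemidef)
    (h2 : (Lam • (1 : Matrix (Fin n) (Fin n) ℝ) - T).PosSemidef) :
    8 * A * (lam * ‖x‖ ^ 2) - (2 * a + 4 * A * (1 - ‖x‖ ^ 2) + 2 * B) * (n * Lam) ≤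
      (T * hess n (auxPhi k a A B x0) x).trace := by
  have hu : 0 ≤ 1 - ‖x‖ ^ 2 := by nlinarith [norm_nonneg x]
  rw [auxPhi_hess, Matrix.mul_sub, Matrix.trace_sub, Matrix.mul_smul, Matrix.mul_smul,
    Matrix.mul_one, Matrix.trace_smul, Matrix.trace_smul, smul_eq_mul, smul_eq_mul]
  have h3 : (Matrix.vecMulVec x.ofLp x.ofLp).PosSemidef := by
    simpa using Matrix.posSemidef_vecMulVec_self_star x.ofLp
  have h4 := aux_trace_lower h1 h3
  have h5 : (Matrix.vecMulVec x.ofLp x.ofLp).trace = ‖x‖ ^ 2 := by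
    rw [Matrix.trace_vecMulVec, EuclideanSpace.real_norm_sq_eq]
    simp [dotProduct, sq]
  rw [h5] at h4
  have h6 := aux_trace_upper h2
  gcongr

end testfun

section final
variable {n : ℕ}

/-- The hypotheses on `b` and `v` in the barrier lemma. -/
structure AuxSol (n : ℕ) (lam Lam q K : ℝ) (b v : EuclideanSpace ℝ (Fin n) → ℝ) : Prop where
  hbc : ContinuousOn b (Metric.ball 0 1)
  hb0 : ∀ x ∈ Metric.ball (0 : EuclideanSpace ℝ (Fin n)) 1, 0 ≤ b x
  hbK : LpNormE n q b (Metric.ball 0 1) ≤ ENNReal.ofReal K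
  hvc : ContinuousOn v (Metric.closedBall 0 1)
  hv2 : ContDiffOn ℝ 2 v (Metric.ball 0 1)
  heq : ∀ x ∈ Metric.ball (0 : EuclideanSpace ℝ (Fin n)) 1,
          pucciMinus n lam Lam (hess n v x) - b x * gradNorm n v x = -1
  hv0 : ∀ x ∈ Metric.sphere (0 : EuclideanSpace ℝ (Fin n)) 1, v x = 0

lemma AuxSol.nonneg {lam Lam q K : ℝ} (hlam : 0 < lam) (hLam : lam ≤ Lam)
    {b v : EuclideanSpace ℝ (Fin n) → ℝ} (h : AuxSol n lam Lam q K b v) :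
    ∀ x ∈ Metric.closedBall (0 : EuclideanSpace ℝ (Fin n)) 1, 0 ≤ v x := by
  obtain ⟨x, hx, hmin⟩ := (isCompact_closedBall (0 : EuclideanSpace ℝ (Fin n)) 1).exists_isMinOn
    ⟨0, by simp⟩ h.hvc
  suffices hvx : 0 ≤ v x from fun y hy => hvx.trans (hmin hy)
  by_cases hxs : x ∈ Metric.sphere (0 : EuclideanSpace ℝ (Fin n)) 1
  · rw [h.hv0 x hxs]
  · exfalso
    have hxb : x ∈ Metric.ball (0 : EuclideanSpace ℝ (Fin n)) 1 := by
      have h1 : dist x 0 ≤ 1 := hx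
      have h2 : dist x 0 ≠ 1 := hxs
      exact lt_of_le_of_ne h1 h2
    have hloc : IsLocalMin v x := (hmin.on_subset Metric.ball_subset_closedBall).isLocalMin
      (Metric.isOpen_ball.mem_nhds hxb)
    have hc2 : ContDiffAt ℝ 2 v x := h.hv2.contDiffAt (Metric.isOpen_ball.mem_nhds hxb)
    have hpsd := aux_hess_min hc2 hloc
    have h1 : 0 ≤ pucciMinus n lam Lam (hess n v x) := aux_pucci_ge hLam fun A h1 _ =>
      (mul_nonneg hlam.le hpsd.trace_nonneg).trans (aux_trace_lower h1 hpsd)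
    have h2 := h.heq x hxb
    rw [gradNorm, hloc.fderiv_eq_zero, norm_zero, mul_zero] at h2
    linarith

lemma aux_small {g D : ℝ} (hg : 0 < g) (hD : 0 < D) :
    ∃ r : ℝ, 0 < r ∧ ∀ s, 0 < s → s ≤ r → D * s ^ g ≤ 1 := by
  refine ⟨(1 / D) ^ (1 / g), by positivity, fun s hs hsr => ?_⟩
  have h1 : s ^ g ≤ ((1 / D) ^ (1 / g)) ^ g := Real.rpow_le_rpow hs.le hsr hg.le
  rw [← Real.rpow_mul (by positivity), one_div_mul_cancel hg.ne', Real.rpow_one] at h1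
  calc D * s ^ g ≤ D * (1 / D) := by gcongr
    _ = 1 := by field_simp

/-- The conclusion of `aux_key`. -/
def AuxKey (n : ℕ) (lam Lam q K C : ℝ) : Prop :=
    ∀ (b v φ : EuclideanSpace ℝ (Fin n) → ℝ),
    ContinuousOn b (Metric.ball 0 1) →
    (∀ x ∈ Metric.ball (0 : EuclideanSpace ℝ (Fin n)) 1, 0 ≤ b x) →
    LpNormE n q b (Metric.ball 0 1) ≤ ENNReal.ofReal K →
    ContinuousOn v (Metric.closedBall 0 1) →
    ContDiffOn ℝ 2 v (Metric.ball 0 1) →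
    (∀ x ∈ Metric.ball (0 : EuclideanSpace ℝ (Fin n)) 1,
          pucciMinus n lam Lam (hess n v x) - b x * gradNorm n v x = -1) →
    ∀ (Ω : Set (EuclideanSpace ℝ (Fin n))), IsOpen Ω → Ω ⊆ Metric.ball 0 1 →
    ∀ (x0 : EuclideanSpace ℝ (Fin n)) (R L : ℝ), 0 < R → x0 ∈ Ω →
    Ω ⊆ Metric.closedBall x0 R →
    ContDiff ℝ 2 φ → 0 ≤ L → (∀ x ∈ Ω, ‖fderiv ℝ φ x‖ ≤ L) →
    (∀ x ∈ Ω, ∀ A : Matrix (Fin n) (Fin n) ℝ,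
      (A - lam • (1 : Matrix (Fin n) (Fin n) ℝ)).PosSemidef →
      (Lam • (1 : Matrix (Fin n) (Fin n) ℝ) - A).PosSemidef → -1 ≤ (A * hess n φ x).trace) →
    (∀ x ∈ frontier Ω, φ x ≤ v x) →
    C * R ^ (1 - n / q) ≤ 1 →
    φ x0 - v x0 ≤ C * L * R * R ^ (1 - n / q)

lemma aux_interior (hn : 1 ≤ n) {lam Lam q K C : ℝ} (hlam : 0 < lam) (hLam : lam ≤ Lam)
    (hC : 0 < C) (hkey : AuxKey n lam Lam q K C)
    {b v : EuclideanSpace ℝ (Fin n) → ℝ} (h : AuxSol n lam Lam q K b v)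
    {ρ : ℝ} (hρ : 0 < ρ) (hsm : 4 * C * ρ ^ (1 - n / q) ≤ 1)
    {y : EuclideanSpace ℝ (Fin n)} (hy : ‖y‖ + ρ ≤ 1) :
    1 / (2 * n * Lam) * ρ ^ 2 / 2 ≤ v y := by
  have hn0 : (0:ℝ) < n := by exact_mod_cast hn
  have hLam0 : 0 < Lam := hlam.trans_le hLam
  set η : ℝ := 1 / (2 * n * Lam) with hη
  have hη0 : 0 < η := by positivity
  have hρα : 0 < ρ ^ (1 - n / q : ℝ) := by positivity
  have hnorm : ∀ x : EuclideanSpace ℝ (Fin n), ‖x‖ ≤ ‖y‖ + ‖x - y‖ := fun x => by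
    have := norm_add_le y (x - y)
    simpa using this
  have hsub : Metric.ball y ρ ⊆ Metric.ball (0 : EuclideanSpace ℝ (Fin n)) 1 := by
    intro x hx
    have h1 : ‖x - y‖ < ρ := by simpa [dist_eq_norm] using hx
    have := hnorm x
    simp only [Metric.mem_ball, dist_zero_right]
    linarith
  have hk := hkey b v (auxPhi (η * ρ ^ 2) 0 0 η y) h.hbc h.hb0 h.hbK h.hvc h.hv2 h.heq
    (Metric.ball y ρ) Metric.isOpen_ball hsub y ρ (2 * η * ρ) hρ (Metric.mem_ball_self hρ)
    Metric.ball_subset_closedBall (auxPhi_contDiff _ _ _ _ _) (by positivity) ?_ ?_ ?_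
    (by linarith [mul_pos hC hρα])
  · have h1 : auxPhi (η * ρ ^ 2) 0 0 η y y = η * ρ ^ 2 := by simp [auxPhi]
    rw [h1] at hk
    have h2 : C * (2 * η * ρ) * ρ * ρ ^ (1 - n / q : ℝ) =
      (η * ρ ^ 2 / 2) * (4 * C * ρ ^ (1 - n / q : ℝ)) := by ring
    have h3 : (η * ρ ^ 2 / 2) * (4 * C * ρ ^ (1 - n / q : ℝ)) ≤ (η * ρ ^ 2 / 2) * 1 := by
      gcongr
    linarith
  · intro x hx
    have h1 : ‖x - y‖ < ρ := by simpa [dist_eq_norm] using hx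
    have h2 : ‖x‖ ≤ 1 := by have := hnorm x; linarith
    refine (auxPhi_norm_le le_rfl le_rfl hη0.le h2).trans ?_
    have : 2 * η * ‖x - y‖ ≤ 2 * η * ρ := by gcongr
    linarith
  · intro x hx A hA1 hA2
    have h1 : ‖x - y‖ < ρ := by simpa [dist_eq_norm] using hx
    have h2 : ‖x‖ ≤ 1 := by have := hnorm x; linarith
    refine le_trans (le_of_eq ?_) (auxPhi_trace_ge le_rfl le_rfl hη0.le h2 hA1 hA2)
    rw [hη]; field_simp; ring
  · intro x hx
    have h1 : ‖x - y‖ = ρ := by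
      simpa [dist_eq_norm] using Metric.frontier_ball_subset_sphere hx
    have h2 : ‖x‖ ≤ 1 := by have := hnorm x; linarith
    have h3 := h.nonneg hlam hLam x (by simpa using h2)
    simp only [auxPhi, h1]
    linarith

lemma aux_step1 (hn : 1 ≤ n) {lam Lam q K C : ℝ} (hlam : 0 < lam) (hLam : lam ≤ Lam)
    (hkey : AuxKey n lam Lam q K C)
    {b v : EuclideanSpace ℝ (Fin n) → ℝ} (h : AuxSol n lam Lam q K b v)
    {s R A B M m : ℝ} (hs : 0 < s) (hs4 : s ≤ 1 / 4) (hsR : s ≤ R)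
    (hCR : C * R ^ (1 - n / q) ≤ 1) (hB : B = 5 * s / R ^ 2)
    (hA : A = n * Lam * (3 + 2 * B) / (2 * lam)) (hAs : A * s ≤ 1 / 16)
    (hm : 0 ≤ m) (hmM : m * (4 * s * (1 + 4 * (A * s))) = M)
    (hM : ∀ x : EuclideanSpace ℝ (Fin n), ‖x‖ = 1 - 2 * s → M ≤ v x)
    {x0 : EuclideanSpace ℝ (Fin n)} (hx0 : ‖x0‖ = 1 - s) :
    m * (2 * s - s ^ 2) - C * (13 * m) * R * R ^ (1 - n / q) ≤ v x0 := by
  have hn0 : (0:ℝ) < n := by exact_mod_cast hn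
  have hLam0 : 0 < Lam := hlam.trans_le hLam
  have hR : 0 < R := hs.trans_le hsR
  have hB0 : 0 < B := by rw [hB]; positivity
  have hA0 : 0 < A := by rw [hA]; positivity
  have hBR : B * R ^ 2 = 5 * s := by rw [hB]; field_simp
  have hBR1 : B * R ≤ 5 := by
    have : B * R = 5 * s / R := by rw [hB]; field_simp
    rw [this, div_le_iff₀ hR]; linarith
  have hAeq : A * (2 * lam) = n * Lam * (3 + 2 * B) := by rw [hA]; field_simp
  have hu4 : ∀ x : EuclideanSpace ℝ (Fin n), 1 - 2 * s ≤ ‖x‖ → 1 - ‖x‖ ^ 2 ≤ 4 * s := by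
    intro x hx
    nlinarith [norm_nonneg x]
  set Ω : Set (EuclideanSpace ℝ (Fin n)) :=
    {x | ‖x‖ < 1} ∩ {x | 1 - 2 * s < ‖x‖} ∩ {x | ‖x - x0‖ < R} with hΩdef
  have hΩ : IsOpen Ω := by
    refine IsOpen.inter (IsOpen.inter ?_ ?_) ?_
    · exact isOpen_lt (by fun_prop) (by fun_prop)
    · exact isOpen_lt (by fun_prop) (by fun_prop)
    · exact isOpen_lt (by fun_prop) (by fun_prop)
  have hmem : ∀ x, x ∈ Ω ↔ (‖x‖ < 1 ∧ 1 - 2 * s < ‖x‖) ∧ ‖x - x0‖ < R := fun x => Iff.rfl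
  have hcl : closure Ω ⊆ {x | ‖x‖ ≤ 1} ∩ {x | 1 - 2 * s ≤ ‖x‖} ∩ {x | ‖x - x0‖ ≤ R} := by
    apply closure_minimal
    · intro x hx
      obtain ⟨⟨h1, h2⟩, h3⟩ := (hmem x).mp hx
      have h1' : ‖x‖ ≤ 1 := h1.le
      have h2' : 1 - 2 * s ≤ ‖x‖ := h2.le
      have h3' : ‖x - x0‖ ≤ R := h3.le
      exact ⟨⟨h1', h2'⟩, h3'⟩
    · refine IsClosed.inter (IsClosed.inter ?_ ?_) ?_
      · exact isClosed_le (by fun_prop) (by fun_prop)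
      · exact isClosed_le (by fun_prop) (by fun_prop)
      · exact isClosed_le (by fun_prop) (by fun_prop)
  have hAu : ∀ x : EuclideanSpace ℝ (Fin n), 1 - 2 * s ≤ ‖x‖ → 4 * A * (1 - ‖x‖ ^ 2) ≤ 1 := by
    intro x hx
    have h1 : A * (1 - ‖x‖ ^ 2) ≤ A * (4 * s) := by gcongr; exact hu4 x hx
    linarith
  have hk := hkey b v (auxPhi 0 m (m * A) (m * B) x0) h.hbc h.hb0 h.hbK h.hvc h.hv2 h.heq
    Ω hΩ (fun x hx => by simpa using hx.1.1) x0 R (13 * m) hR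
    ((hmem x0).mpr ⟨⟨by linarith, by linarith⟩, by simpa using hR⟩)
    (fun x hx => by simpa [dist_eq_norm] using le_of_lt hx.2)
    (auxPhi_contDiff _ _ _ _ _) (by positivity) ?_ ?_ ?_ hCR
  · have h1 : m * (2 * s - s ^ 2) ≤ auxPhi 0 m (m * A) (m * B) x0 x0 := by
      have : 0 ≤ m * A * (1 - (1 - s) ^ 2) ^ 2 := by positivity
      simp only [auxPhi, hx0, sub_self, norm_zero]
      linarith
    linarith
  · intro x hx
    obtain ⟨⟨h1, h2⟩, h3⟩ := (hmem x).mp hx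
    refine (auxPhi_norm_le hm (by positivity) (by positivity) h1.le).trans ?_
    have h4 := hAu x h2.le
    have h5 : B * ‖x - x0‖ ≤ B * R := by gcongr
    have h6 : m * (2 + 4 * A * (1 - ‖x‖ ^ 2) + 2 * (B * ‖x - x0‖)) ≤ m * 13 := by
      gcongr; linarith
    linarith
  · intro x hx T hT1 hT2
    obtain ⟨⟨h1, h2⟩, h3⟩ := (hmem x).mp hx
    refine le_trans ?_ (auxPhi_trace_ge hm (by positivity) (by positivity) h1.le hT1 hT2)
    have h4 := hAu x h2.le
    have h5 : (1:ℝ) / 4 ≤ ‖x‖ ^ 2 := by nlinarith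
    have h6 : A * lam * (1 / 4) ≤ A * lam * ‖x‖ ^ 2 := by gcongr
    have h7 : (2 + 4 * A * (1 - ‖x‖ ^ 2) + 2 * B) * (n * Lam) ≤ (3 + 2 * B) * (n * Lam) := by
      gcongr; linarith
    have h8 : 0 ≤ m * (8 * (A * lam * ‖x‖ ^ 2) -
        (2 + 4 * A * (1 - ‖x‖ ^ 2) + 2 * B) * (n * Lam)) := by
      apply mul_nonneg hm
      linarith
    linarith
  · intro x hx
    rw [hΩ.frontier_eq] at hx
    obtain ⟨hxc, hxn⟩ := hx
    obtain ⟨⟨h1, h2⟩, h3⟩ := hcl hxc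
    simp only [Set.mem_ofPred_eq] at h1 h2 h3
    have hv := h.nonneg hlam hLam x (by simpa using h1)
    have hu := hu4 x h2
    have hu0 : 0 ≤ 1 - ‖x‖ ^ 2 := by nlinarith [norm_nonneg x]
    have hle : m * (1 - ‖x‖ ^ 2) + m * A * (1 - ‖x‖ ^ 2) ^ 2 ≤
        m * (4 * s * (1 + 4 * (A * s))) := by
      have e1 : m * (1 - ‖x‖ ^ 2) + m * A * (1 - ‖x‖ ^ 2) ^ 2 ≤
        m * (4 * s) + m * A * (4 * s) ^ 2 := by gcongr
      linarith
    by_cases c1 : ‖x‖ = 1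
    · have : 0 ≤ m * B * ‖x - x0‖ ^ 2 := by positivity
      simp only [auxPhi, c1]
      linarith
    by_cases c2 : ‖x‖ = 1 - 2 * s
    · have := hM x c2
      have : 0 ≤ m * B * ‖x - x0‖ ^ 2 := by positivity
      simp only [auxPhi]
      linarith
    have c3 : ‖x - x0‖ = R := by
      by_contra c3
      exact hxn ((hmem x).mpr ⟨⟨lt_of_le_of_ne h1 c1, lt_of_le_of_ne h2 (Ne.symm c2)⟩,
        lt_of_le_of_ne h3 c3⟩)
    have e1 : m * (4 * s * (1 + 4 * (A * s))) ≤ m * (5 * s) := by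
      apply mul_le_mul_of_nonneg_left _ hm
      have : 4 * s * (1 + 4 * (A * s)) ≤ 4 * s * (5 / 4) := by
        apply mul_le_mul_of_nonneg_left _ (by positivity)
        linarith
      linarith
    have e2 : m * B * R ^ 2 = m * (5 * s) := by rw [mul_assoc, hBR]
    simp only [auxPhi, c3]
    linarith

set_option maxHeartbeats 1000000 in
lemma aux_step2 (hn : 1 ≤ n) {lam Lam q K C : ℝ} (hlam : 0 < lam) (hLam : lam ≤ Lam)
    (hq : (n : ℝ) < q) (hC : 0 < C) (hkey : AuxKey n lam Lam q K C) :
    ∃ g C5 s0 : ℝ, 0 < g ∧ 0 < C5 ∧ 0 < s0 ∧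
    ∀ (b v : EuclideanSpace ℝ (Fin n) → ℝ), AuxSol n lam Lam q K b v →
    ∀ s M : ℝ, 0 < s → s ≤ s0 → 0 ≤ M →
    (∀ x : EuclideanSpace ℝ (Fin n), ‖x‖ = 1 - 2 * s → M ≤ v x) →
    ∀ x0 : EuclideanSpace ℝ (Fin n), ‖x0‖ = 1 - s → M / 2 * (1 - C5 * s ^ g) ≤ v x0 := by
  have hn0 : (0:ℝ) < n := by exact_mod_cast hn
  have hLam0 : 0 < Lam := hlam.trans_le hLam
  have hq0 : 0 < q := hn0.trans hq
  set α : ℝ := 1 - n / q with hα_def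
  have hα : 0 < α := by rw [hα_def, sub_pos, div_lt_one hq0]; exact hq
  have hα1 : α ≤ 1 := by
    have : 0 < n / q := by positivity
    linarith
  set D : ℝ := 13 * n * Lam / (2 * lam) with hD
  have hD0 : 0 < D := by positivity
  have hg : 0 < α / 2 := by positivity
  obtain ⟨r1, hr1, hr1'⟩ := aux_small hg (by positivity : 0 < 16 * D)
  obtain ⟨r2, hr2, hr2'⟩ := aux_small hg hC
  refine ⟨α / 2, 1 + 7 * C + 4 * D, min (1 / 4) (min r1 r2), hg, by positivity, by positivity, ?_⟩
  intro b v h s M hs hss hM0 hM x0 hx0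
  have hs4 : s ≤ 1 / 4 := hss.trans (min_le_left _ _)
  have hsr1 : s ≤ r1 := hss.trans ((min_le_right _ _).trans (min_le_left _ _))
  have hsr2 : s ≤ r2 := hss.trans ((min_le_right _ _).trans (min_le_right _ _))
  have hy1 := hr1' s hs hsr1
  have hy2 := hr2' s hs hsr2
  set y : ℝ := s ^ (α / 2) with hy
  have hy0 : 0 < y := by positivity
  have hs1 : s ≤ 1 := by linarith
  have hsy : s ≤ y := by
    have := Real.rpow_le_rpow_of_exponent_ge hs hs1 (by linarith : α / 2 ≤ 1)
    rwa [Real.rpow_one] at this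
  set R : ℝ := s ^ (1 - α / 4) with hRdef
  have hR0 : 0 < R := by positivity
  have hsR : s ≤ R := by
    have := Real.rpow_le_rpow_of_exponent_ge hs hs1 (by linarith : 1 - α / 4 ≤ 1)
    rwa [Real.rpow_one] at this
  have hRα : R ^ α ≤ y := by
    rw [hRdef, ← Real.rpow_mul hs.le]
    apply Real.rpow_le_rpow_of_exponent_ge hs hs1
    nlinarith
  have hRR : R * R ^ α ≤ s * y := by
    have e1 : R * R ^ α = s ^ ((1 - α / 4) * (1 + α)) := by
      rw [hRdef, ← Real.rpow_mul hs.le, ← Real.rpow_add hs]; congr 1; ring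
    have e2 : s * y = s ^ (1 + α / 2) := by rw [Real.rpow_add hs, Real.rpow_one]
    rw [e1, e2]
    apply Real.rpow_le_rpow_of_exponent_ge hs hs1
    nlinarith
  have hR2 : R ^ 2 * y = s ^ 2 := by
    rw [hRdef, ← Real.rpow_natCast, ← Real.rpow_mul hs.le, ← Real.rpow_add hs,
      ← Real.rpow_natCast]
    congr 1; push_cast; ring
  set B : ℝ := 5 * s / R ^ 2 with hB
  set A : ℝ := n * Lam * (3 + 2 * B) / (2 * lam) with hA
  have hB0 : 0 < B := by positivity
  have hA0 : 0 < A := by positivity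
  have hsB : B * s = 5 * y := by
    rw [hB]; field_simp; linarith
  have hAs : A * s ≤ D * y := by
    have e1 : A * s = n * Lam / (2 * lam) * (3 * s + 2 * (B * s)) := by rw [hA]; ring
    have e2 : D * y = n * Lam / (2 * lam) * (13 * y) := by rw [hD]; ring
    rw [e1, e2]
    gcongr
    linarith
  set m : ℝ := M / (4 * s * (1 + 4 * (A * s))) with hm
  have hm0 : 0 ≤ m := by positivity
  have hmM : m * (4 * s * (1 + 4 * (A * s))) = M := by rw [hm]; field_simp
  have hfin := aux_step1 hn hlam hLam hkey h hs hs4 hsR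
    (by
      have : C * R ^ α ≤ C * y := by gcongr
      linarith) hB hA (by linarith) hm0 hmM hM hx0
  have e1 : C * (13 * m) * R * R ^ α ≤ C * (13 * m) * (s * y) := by
    rw [mul_assoc (C * (13 * m))]
    gcongr
  have e2 : m * (2 * s) * (1 - (1 + 7 * C) * y) ≤ v x0 := by
    have : m * s * (s + 13 * C * y) ≤ m * s * (2 * (1 + 7 * C) * y) := by
      gcongr
      nlinarith [mul_pos hC hy0]
    linarith
  refine le_trans ?_ e2
  rw [← hmM]
  set z := A * s with hz
  have hz0 : 0 < z := by positivity
  have e3 : (1 + 4 * z) * (1 - (1 + 7 * C + 4 * D) * y) ≤ 1 - (1 + 7 * C) * y := by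
    have h1 : (1 + 4 * z) * (1 - (1 + 7 * C + 4 * D) * y) ≤
      (1 + 4 * z) * (1 - (1 + 7 * C) * y - 4 * z) := by
      apply mul_le_mul_of_nonneg_left _ (by positivity)
      have : (1 + 7 * C + 4 * D) * y = (1 + 7 * C) * y + 4 * (D * y) := by ring
      linarith
    have h2 : 0 ≤ z * ((1 + 7 * C) * y) := by positivity
    have h3 : (1 + 4 * z) * (1 - (1 + 7 * C) * y - 4 * z) =
      1 - (1 + 7 * C) * y - 4 * (z * ((1 + 7 * C) * y)) - 16 * z ^ 2 := by ring
    have h4 := sq_nonneg z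
    linarith
  have e4 : m * (2 * s) * ((1 + 4 * z) * (1 - (1 + 7 * C + 4 * D) * y)) ≤
      m * (2 * s) * (1 - (1 + 7 * C) * y) := by gcongr
  linarith

lemma aux_final (hn : 1 ≤ n) {lam Lam q K : ℝ} (hlam : 0 < lam) (hLam : lam ≤ Lam)
    (hq : (n : ℝ) < q) (hK : 0 < K) :
    ∃ c₀ : ℝ, 0 < c₀ ∧ ∀ (b v : EuclideanSpace ℝ (Fin n) → ℝ), AuxSol n lam Lam q K b v →
    ∀ x ∈ Metric.ball (0 : EuclideanSpace ℝ (Fin n)) 1, c₀ * (1 - ‖x‖) ≤ v x := by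
  have hn0 : (0:ℝ) < n := by exact_mod_cast hn
  have hLam0 : 0 < Lam := hlam.trans_le hLam
  have hq0 : 0 < q := hn0.trans hq
  have hα : 0 < 1 - n / q := by rw [sub_pos, div_lt_one hq0]; exact hq
  obtain ⟨C, hC, hkey⟩ := aux_key hn hlam hLam hq hK
  obtain ⟨g, C5, s0, hg, hC5, hs0, hstep⟩ := aux_step2 hn hlam hLam hq hC hkey
  have h2g : 0 < (2:ℝ) ^ g - 1 := sub_pos.mpr (Real.one_lt_rpow (by norm_num) hg)
  have h2g0 : 0 < (2:ℝ) ^ g := by positivity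
  set P : ℝ := 2 * C5 / ((2:ℝ) ^ g - 1) with hP
  have hP0 : 0 < P := by positivity
  have hPe : P * ((2:ℝ) ^ g - 1) = 2 * C5 := by rw [hP]; field_simp
  obtain ⟨r1, hr1, hr1'⟩ := aux_small hg (by positivity : 0 < P * (2:ℝ) ^ g)
  obtain ⟨r2, hr2, hr2'⟩ := aux_small hα (by positivity : 0 < 4 * C)
  set r0 : ℝ := min (min (1 / 2) s0) (min r1 r2) with hr0
  have hr00 : 0 < r0 := by positivity
  have hr0h : r0 ≤ 1 / 2 := (min_le_left _ _).trans (min_le_left _ _)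
  have hr0s : r0 ≤ s0 := (min_le_left _ _).trans (min_le_right _ _)
  have hr0r1 : r0 ≤ r1 := (min_le_right _ _).trans (min_le_left _ _)
  have hr0r2 : r0 ≤ r2 := (min_le_right _ _).trans (min_le_right _ _)
  set c : ℝ := 1 / (2 * n * Lam) * (r0 / 2) ^ 2 / 2 with hc
  have hc0 : 0 < c := by positivity
  refine ⟨c, hc0, fun b v h x hx => ?_⟩
  have hinter : ∀ z : EuclideanSpace ℝ (Fin n), ‖z‖ + r0 / 2 ≤ 1 → c ≤ v z := fun z hz =>
    aux_interior hn hlam hLam hC hkey h (by positivity)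
      (hr2' _ (by positivity) (by linarith)) hz
  have hPs : ∀ s, 0 < s → s ≤ r0 → P * s ^ g ≤ 1 ∧ P * (2:ℝ) ^ g * s ^ g ≤ 1 := by
    intro s hs hsr
    have h1 := hr1' s hs (hsr.trans hr0r1)
    have h2 : 0 < P * s ^ g := by positivity
    refine ⟨?_, h1⟩
    nlinarith
  have hind : ∀ k : ℕ, ∀ z : EuclideanSpace ℝ (Fin n), r0 / 2 ^ (k + 1) ≤ 1 - ‖z‖ →
      1 - ‖z‖ ≤ r0 → c * ((1 - ‖z‖) * (1 + P * (1 - ‖z‖) ^ g)) ≤ v z := by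
    intro k
    have base : ∀ z : EuclideanSpace ℝ (Fin n), r0 / 2 ≤ 1 - ‖z‖ →
      1 - ‖z‖ ≤ r0 → c * ((1 - ‖z‖) * (1 + P * (1 - ‖z‖) ^ g)) ≤ v z := by
      intro z hz1 hz2
      have h1 := (hPs (1 - ‖z‖) (by linarith) hz2).1
      have h2 : (1 - ‖z‖) * (1 + P * (1 - ‖z‖) ^ g) ≤ (1 / 2) * 2 := by
        have hd : 0 < 1 - ‖z‖ := by linarith
        have hd' : 0 < (1 - ‖z‖) ^ g := Real.rpow_pos_of_pos hd g
        exact mul_le_mul (by linarith) (by linarith) (by positivity) (by norm_num)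
      have h3 : c * ((1 - ‖z‖) * (1 + P * (1 - ‖z‖) ^ g)) ≤ c * ((1 / 2) * 2) := by gcongr
      have h4 := hinter z (by linarith)
      linarith
    induction k with
    | zero => intro z hz1; exact base z (by simpa using hz1)
    | succ k ih =>
      intro z hz1 hz2
      by_cases hcase : r0 / 2 ≤ 1 - ‖z‖
      · exact base z hcase hz2
      push Not at hcase
      set s : ℝ := 1 - ‖z‖ with hs
      have hs0' : 0 < s := lt_of_lt_of_le (by positivity) hz1
      have h2s : r0 / 2 ^ (k + 1) ≤ 2 * s := by
        have : r0 / 2 ^ (k + 1) = 2 * (r0 / 2 ^ (k + 1 + 1)) := by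
          rw [pow_succ (2:ℝ) (k + 1)]; field_simp
        rw [this]; linarith
      have hst := hstep b v h s (c * (2 * s * (1 + P * (2 * s) ^ g))) hs0' (by linarith)
        (by positivity) (fun w hw => by
          have e : 1 - ‖w‖ = 2 * s := by rw [hw]; ring
          have := ih w (by rw [e]; exact h2s) (by rw [e]; linarith)
          rwa [e] at this) z (by rw [hs]; ring)
      refine le_trans ?_ hst
      rw [Real.mul_rpow (by norm_num) hs0'.le]
      obtain ⟨-, hy⟩ := hPs s hs0' hz2
      set y : ℝ := s ^ g with hydef
      have hy0 : 0 < y := by positivity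
      have h5 : 1 + P * y ≤ (1 + P * ((2:ℝ) ^ g * y)) * (1 - C5 * y) := by
        have h6 : C5 * y * (P * (2:ℝ) ^ g * y) ≤ C5 * y * 1 := by gcongr
        have h7 : P * ((2:ℝ) ^ g - 1) * y = 2 * C5 * y := by rw [hPe]
        linarith
      have h8 : c * s * (1 + P * y) ≤ c * s * ((1 + P * ((2:ℝ) ^ g * y)) * (1 - C5 * y)) := by
        gcongr
      linarith
  have hx1 : ‖x‖ < 1 := by simpa using hx
  have hd : 0 < 1 - ‖x‖ := by linarith
  by_cases hbig : r0 ≤ 1 - ‖x‖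
  · have h1 := hinter x (by linarith)
    have h2 : c * (1 - ‖x‖) ≤ c * 1 := by gcongr; linarith [norm_nonneg x]
    linarith
  · push Not at hbig
    obtain ⟨k, hk⟩ := exists_pow_lt_of_lt_one (div_pos hd hr00) (by norm_num : (1/2:ℝ) < 1)
    have hk' : r0 / 2 ^ (k + 1) ≤ 1 - ‖x‖ := by
      rw [lt_div_iff₀ hr00] at hk
      have e1 : r0 / 2 ^ (k + 1) = (1 / 2) ^ k * r0 / 2 := by
        rw [pow_succ, one_div, inv_pow]; field_simp
      have : 0 < (1 / 2 : ℝ) ^ k * r0 := by positivity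
      rw [e1]; linarith
    have h1 := hind k x hk' hbig.le
    refine le_trans ?_ h1
    have : 0 ≤ c * (1 - ‖x‖) * (P * (1 - ‖x‖) ^ g) := by positivity
    linarith
end final

/-- Barrier lemma in the unit ball. -/
theorem barrier_lemma_unit_ball
    (n : ℕ) (hn : 2 ≤ n) (lam Lam : ℝ) (hlam : 0 < lam) (hLam : lam ≤ Lam)
    (q K : ℝ) (hq : (n : ℝ) < q) (hK : 0 < K) :
    ∃ c₀ : ℝ, 0 < c₀ ∧
      ∀ b v : EuclideanSpace ℝ (Fin n) → ℝ,
        ContinuousOn b (Metric.ball 0 1) →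
        (∀ x ∈ Metric.ball (0 : EuclideanSpace ℝ (Fin n)) 1, 0 ≤ b x) →
        LpNormE n q b (Metric.ball 0 1) ≤ ENNReal.ofReal K →
        ContinuousOn v (Metric.closedBall 0 1) →
        ContDiffOn ℝ 2 v (Metric.ball 0 1) →
        (∀ x ∈ Metric.ball (0 : EuclideanSpace ℝ (Fin n)) 1,
          pucciMinus n lam Lam (hess n v x) - b x * gradNorm n v x = -1) →
        (∀ x ∈ Metric.sphere (0 : EuclideanSpace ℝ (Fin n)) 1, v x = 0) →
        ∀ x ∈ Metric.ball (0 : EuclideanSpace ℝ (Fin n)) 1, c₀ * (1 - ‖x‖) ≤ v x := by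
  obtain ⟨c₀, hc, h⟩ := aux_final (by omega : 1 ≤ n) hlam hLam hq hK
  exact ⟨c₀, hc, fun b v h1 h2 h3 h4 h5 h6 h7 => h b v ⟨h1, h2, h3, h4, h5, h6, h7⟩⟩
end

section
/- First step of the quantitative strong maximum principle. For every integer n ≥ 2, reals 0 < λ ≤ Λ, exponent q > n, and K > 0, there exist constants δ₁ > 0 and c₁ > 0 such that the following holds. Let b : B₁ → ℝ be continuous, b ≥ 0, ‖b‖_{L^q(B₁)} ≤ K, and let u be a C² function on B₁ with u ≥ 0, such that g(x) := 𝓜⁻(D²u(x)) − b(x)|Du(x)| ≤ 0 for all x ∈ B₁. If |{x ∈ B₁ : −g(x) ≥ 1}| ≥ (1−δ₁)·|B₁|, then inf_{x ∈ B₁} u(x)/(1−|x|) ≥ c₁. -/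
open MeasureTheory
open scoped ENNReal

lemma qs_trace_mul_nonneg {n : ℕ} {A P : Matrix (Fin n) (Fin n) ℝ} (hA : A.PosSemidef)
    (hP : P.PosSemidef) : 0 ≤ (A * P).trace := by
  classical
  obtain ⟨B, hB⟩ : ∃ B : Matrix (Fin n) (Fin n) ℝ, P = B.conjTranspose * B := by
    open scoped MatrixOrder in
    exact CStarAlgebra.nonneg_iff_eq_star_mul_self.mp hP.nonneg
  rw [hB, ← Matrix.mul_assoc, Matrix.trace_mul_comm, ← Matrix.mul_assoc]
  exact (hA.mul_mul_conjTranspose_same B).trace_nonneg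

lemma qs_pucci {n : ℕ} {lam Lam : ℝ} (hLam : lam ≤ Lam)
    {P H : Matrix (Fin n) (Fin n) ℝ} (hP : P.PosSemidef) (σ : ℝ)
    (h : ∀ A : Matrix (Fin n) (Fin n) ℝ, 
      (A - lam • (1 : Matrix (Fin n) (Fin n) ℝ)).PosSemidef →
      (Lam • (1 : Matrix (Fin n) (Fin n) ℝ) - A).PosSemidef → σ ≤ (A * H).trace) :
    lam * P.trace + σ ≤ pucciMinus n lam Lam (P + H) := by
  unfold pucciMinus
  apply le_csInf
  · refine ⟨_, lam • 1, ?_, ?_, ?_, rfl⟩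
    · simp [Matrix.IsSymm]
    · simpa using Matrix.PosSemidef.zero
    · rw [← sub_smul]
      exact Matrix.PosSemidef.one.smul (by linarith)
  · rintro t ⟨A, hA, h1, h2, rfl⟩
    have := qs_trace_mul_nonneg h1 hP
    have h3 := h A h1 h2
    simp only [Matrix.sub_mul, Matrix.trace_sub, Matrix.smul_mul, Matrix.one_mul,
      Matrix.trace_smul, smul_eq_mul] at this
    rw [Matrix.mul_add, Matrix.trace_add]
    linarith

lemma qs_det_le {n : ℕ} {P : Matrix (Fin n) (Fin n) ℝ} (hP : P.PosSemidef) :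
    |P.det| ≤ P.trace ^ n := by
  rw [abs_of_nonneg hP.det_nonneg, hP.isHermitian.det_eq_prod_eigenvalues,
    hP.isHermitian.trace_eq_sum_eigenvalues]
  simp only [RCLike.ofReal_real_eq_id, id]
  calc _ ≤ ∏ i : Fin n, (∑ j, hP.isHermitian.eigenvalues j) :=
        Finset.prod_le_prod (fun i _ => hP.eigenvalues_nonneg i)
          (fun i _ => Finset.single_le_sum (fun j _ => hP.eigenvalues_nonneg j)
            (Finset.mem_univ i))
    _ = _ := by simp

lemma qs_hess_apply {n : ℕ} {v : EuclideanSpace ℝ (Fin n) → ℝ} {x : EuclideanSpace ℝ (Fin n)}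
    (hv : DifferentiableAt ℝ (fderiv ℝ v) x) (i j : Fin n) :
    hess n v x i j = fderiv ℝ (fderiv ℝ v) x (EuclideanSpace.single i 1)
      (EuclideanSpace.single j 1) := by
  unfold hess
  rw [fderiv_clm_apply hv (differentiableAt_const _)]
  simp

lemma qs_diff_fderiv {n : ℕ} {v : EuclideanSpace ℝ (Fin n) → ℝ} {x : EuclideanSpace ℝ (Fin n)}
    (hv : ContDiffAt ℝ 2 v x) : DifferentiableAt ℝ (fderiv ℝ v) x :=
  (hv.fderiv_right (m := 1) (by norm_num)).differentiableAt (by norm_num)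

lemma qs_expand {n : ℕ} (z : EuclideanSpace ℝ (Fin n)) :
    z = ∑ i, z i • EuclideanSpace.single i (1 : ℝ) := by
  have := (EuclideanSpace.basisFun (Fin n) ℝ).sum_repr z
  simpa using this.symm

lemma qs_quad {n : ℕ} {v : EuclideanSpace ℝ (Fin n) → ℝ} {x : EuclideanSpace ℝ (Fin n)}
    (hv : DifferentiableAt ℝ (fderiv ℝ v) x) (z : EuclideanSpace ℝ (Fin n)) :
    (fun i => z i) ⬝ᵥ (Matrix.mulVec (hess n v x) (fun i => z i)) =
      fderiv ℝ (fderiv ℝ v) x z z := by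
  conv_rhs => rw [qs_expand z]
  simp only [map_sum, map_smul, sum_apply, smul_apply,
    dotProduct, Matrix.mulVec, qs_hess_apply hv, smul_eq_mul, Finset.mul_sum]
  rw [Finset.sum_comm]
  refine Finset.sum_congr rfl fun i _ => Finset.sum_congr rfl fun j _ => ?_
  ring

lemma qs_second {n : ℕ} {v : EuclideanSpace ℝ (Fin n) → ℝ} {x : EuclideanSpace ℝ (Fin n)}
    (hv : ContDiffAt ℝ 2 v x) (hmin : IsLocalMin v x) (z : EuclideanSpace ℝ (Fin n)) :
    0 ≤ fderiv ℝ (fderiv ℝ v) x z z := by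
  by_contra! hneg
  have hd := qs_diff_fderiv hv
  set g : ℝ → ℝ := fun τ => v (x + τ • z) with hg
  have hline : ∀ τ : ℝ, HasDerivAt (fun τ : ℝ => x + τ • z) z τ := by
    intro τ
    simpa using ((hasDerivAt_id τ).smul_const z).const_add x
  have hcont : Continuous (fun τ : ℝ => x + τ • z) := by fun_prop
  have htend : Filter.Tendsto (fun τ : ℝ => x + τ • z) (nhds 0) (nhds x) := by
    have := hcont.tendsto 0
    simpa using this
  have hev : ∀ᶠ τ in nhds (0 : ℝ), ContDiffAt ℝ 2 v (x + τ • z) :=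
    htend.eventually (hv.eventually (by simp))
  have hder : deriv g =ᶠ[nhds 0] fun τ => fderiv ℝ v (x + τ • z) z := by
    filter_upwards [hev] with τ hτ
    exact ((hτ.differentiableAt (by norm_num)).hasFDerivAt.comp_hasDerivAt τ (hline τ)).deriv
  have hg'' : deriv (deriv g) 0 = fderiv ℝ (fderiv ℝ v) x z z := by
    rw [hder.deriv_eq]
    have hd0 : HasFDerivAt (fderiv ℝ v) (fderiv ℝ (fderiv ℝ v) x) (x + (0 : ℝ) • z) := by
      simpa using hd.hasFDerivAt
    have h1 := hd0.comp_hasDerivAt (0 : ℝ) (hline 0)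
    have h2 := h1.clm_apply (hasDerivAt_const (0 : ℝ) z)
    simpa using h2.deriv
  have hgmin : IsLocalMin g 0 := by
    have := htend.eventually hmin
    filter_upwards [this] with τ hτ
    simpa [hg] using hτ
  have hgc : ContinuousAt g 0 := by
    have : ContinuousAt v (x + (0 : ℝ) • z) := by simpa using hv.continuousAt
    exact ContinuousAt.comp this hcont.continuousAt
  have hgmax := isLocalMax_of_deriv_deriv_neg (by rw [hg'']; exact hneg) hgmin.deriv_eq_zero hgc
  have hconst : g =ᶠ[nhds 0] fun _ => g 0 := by
    filter_upwards [hgmin, hgmax] with τ h1 h2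
    exact le_antisymm h2 h1
  have : deriv (deriv g) 0 = 0 := by
    have h1 := hconst.deriv
    rw [h1.deriv_eq]
    simp
  rw [hg''] at this
  linarith

lemma qs_psd {n : ℕ} {v : EuclideanSpace ℝ (Fin n) → ℝ} {x : EuclideanSpace ℝ (Fin n)}
    (hv : ContDiffAt ℝ 2 v x) (h : ∀ z, 0 ≤ fderiv ℝ (fderiv ℝ v) x z z) :
    (hess n v x).PosSemidef := by
  have hd := qs_diff_fderiv hv
  refine Matrix.PosSemidef.of_dotProduct_mulVec_nonneg ?_ ?_
  · ext i j
    have hs := hv.isSymmSndFDerivAt (by simp)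
    simp only [Matrix.conjTranspose_apply, star_trivial, qs_hess_apply hd]
    exact hs _ _
  · intro z
    have := qs_quad hd (WithLp.toLp 2 z)
    simp only [star_trivial]
    rw [show z = fun i => (WithLp.toLp 2 z) i from rfl, this]
    exact h _

/-- identification of the dual with the space -/
noncomputable def qsPhi (n : ℕ) :
    (EuclideanSpace ℝ (Fin n) →L[ℝ] ℝ) →L[ℝ] EuclideanSpace ℝ (Fin n) :=
  ∑ i, (ContinuousLinearMap.apply ℝ ℝ
    (EuclideanSpace.single i (1 : ℝ) : EuclideanSpace ℝ (Fin n))).smulRight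
      (EuclideanSpace.single i (1 : ℝ))

lemma qsPhi_apply {n : ℕ} (L : EuclideanSpace ℝ (Fin n) →L[ℝ] ℝ) (j : Fin n) :
    qsPhi n L j = L (EuclideanSpace.single j 1) := by
  simp [qsPhi, Pi.single_apply]

/-- the gradient as a vector field -/
noncomputable def qsGrad (n : ℕ) (v : EuclideanSpace ℝ (Fin n) → ℝ)
    (x : EuclideanSpace ℝ (Fin n)) : EuclideanSpace ℝ (Fin n) :=
  qsPhi n (fderiv ℝ v x)

noncomputable def qsGrad' (n : ℕ) (v : EuclideanSpace ℝ (Fin n) → ℝ)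
    (x : EuclideanSpace ℝ (Fin n)) : EuclideanSpace ℝ (Fin n) →L[ℝ] EuclideanSpace ℝ (Fin n) :=
  (qsPhi n).comp (fderiv ℝ (fderiv ℝ v) x)

lemma qs_grad_hasFDeriv {n : ℕ} {v : EuclideanSpace ℝ (Fin n) → ℝ} {x : EuclideanSpace ℝ (Fin n)}
    (hv : DifferentiableAt ℝ (fderiv ℝ v) x) : HasFDerivAt (qsGrad n v) (qsGrad' n v x) x :=
  (qsPhi n).hasFDerivAt.comp x hv.hasFDerivAt

lemma qs_grad_det {n : ℕ} {v : EuclideanSpace ℝ (Fin n) → ℝ} {x : EuclideanSpace ℝ (Fin n)}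
    (hv : DifferentiableAt ℝ (fderiv ℝ v) x) : (qsGrad' n v x).det = (hess n v x).det := by
  rw [ContinuousLinearMap.det, ← LinearMap.det_toMatrix (EuclideanSpace.basisFun (Fin n) ℝ).toBasis,
    ← Matrix.det_transpose]
  congr 1
  ext i j
  rw [qs_hess_apply hv, Matrix.transpose_apply, LinearMap.toMatrix_apply]
  simp [qsGrad', qsPhi_apply]

/-- ABP-type lemma. -/
lemma qs_abp {n : ℕ} (hn : 1 ≤ n) {v : EuclideanSpace ℝ (Fin n) → ℝ}
    {D K : Set (EuclideanSpace ℝ (Fin n))} (hv : ContDiffOn ℝ 2 v (Metric.ball 0 1))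
    (hK : IsCompact K) (hKB : K ⊆ Metric.ball 0 1) (hD : IsOpen D) (hDK : D ⊆ K)
    {x₀ : EuclideanSpace ℝ (Fin n)} (hx₀ : x₀ ∈ D) {t R : ℝ} (ht : 0 < t)
    (hR : ∀ x ∈ K, ‖x - x₀‖ ≤ R)
    (hbd : ∀ x ∈ K, x ∉ D → v x₀ + t * R < v x) :
    ∃ Γ : Set (EuclideanSpace ℝ (Fin n)), MeasurableSet Γ ∧ Γ ⊆ D ∧
      (∀ x ∈ Γ, ‖fderiv ℝ v x‖ ≤ t ∧ (hess n v x).PosSemidef ∧ 0 < (hess n v x).trace) ∧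
      volume (Metric.ball (0 : EuclideanSpace ℝ (Fin n)) t) ≤
        ∫⁻ x in Γ, ENNReal.ofReal ((hess n v x).trace ^ n) := by
  have hDB : D ⊆ Metric.ball 0 1 := hDK.trans hKB
  have hvD : ∀ x ∈ D, ContDiffAt ℝ 2 v x := fun x hx =>
    hv.contDiffAt (Metric.isOpen_ball.mem_nhds (hDB hx))
  have hc1 : ContinuousOn (fderiv ℝ v) D := fun x hx =>
    (qs_diff_fderiv (hvD x hx)).continuousAt.continuousWithinAt
  have hc2 : ContinuousOn (fderiv ℝ (fderiv ℝ v)) D := fun x hx =>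
    (((hvD x hx).fderiv_right (m := 1) (by norm_num)).fderiv_right (m := 0)
      (by norm_num)).continuousAt.continuousWithinAt
  have hctr : ContinuousOn (fun x => (hess n v x).trace) D := by
    have : ContinuousOn (fun x => ∑ i, fderiv ℝ (fderiv ℝ v) x (EuclideanSpace.single i 1)
      (EuclideanSpace.single i 1)) D := by fun_prop
    refine this.congr fun x hx => ?_
    simp only [Matrix.trace, Matrix.diag_apply, qs_hess_apply (qs_diff_fderiv (hvD x hx))]
  -- the contact set
  set Γ₀ : Set (EuclideanSpace ℝ (Fin n)) := D ∩ {x | ‖fderiv ℝ v x‖ ≤ t ∧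
    ∀ z, 0 ≤ fderiv ℝ (fderiv ℝ v) x z z} with hΓ₀
  have hΓ₀m : MeasurableSet Γ₀ := by
    have h1 : MeasurableSet (D ∩ {x | ‖fderiv ℝ v x‖ ≤ t}) := by
      obtain ⟨F, hF, hFe⟩ := (continuousOn_iff_isClosed.mp (hc1.norm)) (Set.Iic t) isClosed_Iic
      have : D ∩ {x | ‖fderiv ℝ v x‖ ≤ t} = F ∩ D := by
        rw [← hFe, Set.inter_comm]; rfl
      rw [this]; exact hF.measurableSet.inter hD.measurableSet
    have h2 : MeasurableSet (D ∩ {x | ∀ z, 0 ≤ fderiv ℝ (fderiv ℝ v) x z z}) := by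
      have hz : ∀ z, ∃ F : Set (EuclideanSpace ℝ (Fin n)), IsClosed F ∧
          (fun x => fderiv ℝ (fderiv ℝ v) x z z) ⁻¹' (Set.Ici 0) ∩ D = F ∩ D := fun z =>
        continuousOn_iff_isClosed.mp (by fun_prop) (Set.Ici 0) isClosed_Ici
      choose F hF hFe using hz
      have : D ∩ {x | ∀ z, 0 ≤ fderiv ℝ (fderiv ℝ v) x z z} = (⋂ z, F z) ∩ D := by
        ext x
        constructor
        · rintro ⟨hx, hx2⟩
          refine ⟨Set.mem_iInter.mpr fun z => ?_, hx⟩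
          have : x ∈ F z ∩ D := by rw [← hFe]; exact ⟨hx2 z, hx⟩
          exact this.1
        · rintro ⟨hx2, hx⟩
          refine ⟨hx, fun z => ?_⟩
          have : x ∈ F z ∩ D := ⟨Set.mem_iInter.mp hx2 z, hx⟩
          rw [← hFe] at this
          exact this.1
      rw [this]
      exact (isClosed_iInter hF).measurableSet.inter hD.measurableSet
    have : Γ₀ = (D ∩ {x | ‖fderiv ℝ v x‖ ≤ t}) ∩
        (D ∩ {x | ∀ z, 0 ≤ fderiv ℝ (fderiv ℝ v) x z z}) := by
      ext x; simp only [hΓ₀, Set.mem_inter_iff, Set.mem_ofPred_eq]; tauto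
    rw [this]; exact h1.inter h2
  have hpos : MeasurableSet (D ∩ {x | 0 < (hess n v x).trace}) :=
    (hctr.isOpen_inter_preimage hD isOpen_Ioi).measurableSet
  set Γ := Γ₀ ∩ (D ∩ {x | 0 < (hess n v x).trace}) with hΓ
  have hpsd : ∀ x ∈ Γ₀, (hess n v x).PosSemidef := fun x hx => qs_psd (hvD x hx.1) hx.2.2
  refine ⟨Γ, hΓ₀m.inter hpos, fun x hx => hx.1.1, fun x hx => ⟨hx.1.2.1, hpsd x hx.1, hx.2.2⟩, ?_⟩
  have himg : Metric.ball (0 : EuclideanSpace ℝ (Fin n)) t ⊆ qsGrad n v '' Γ₀ := by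
    intro p hp
    have hpt : ‖p‖ < t := by simpa using hp
    have hcv : ContinuousOn (fun x => v x - inner ℝ p x) K := by
      have := hv.continuousOn.mono hKB
      fun_prop
    obtain ⟨x, hxK, hxmin⟩ := hK.exists_isMinOn ⟨x₀, hDK hx₀⟩ hcv
    have hxD : x ∈ D := by
      by_contra hxD
      have h1 := hbd x hxK hxD
      have h2 : v x - inner ℝ p x ≤ v x₀ - inner ℝ p x₀ := hxmin (hDK hx₀)
      have h3 : inner ℝ p (x - x₀) ≤ ‖p‖ * ‖x - x₀‖ := real_inner_le_norm _ _
      have h4 : ‖p‖ * ‖x - x₀‖ ≤ t * R := by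
        apply mul_le_mul hpt.le (hR x hxK) (norm_nonneg _) ht.le
      rw [inner_sub_right] at h3
      linarith
    have hC := hvD x hxD
    have hlin : ContDiffAt ℝ 2 (fun y : EuclideanSpace ℝ (Fin n) => innerSL ℝ p y) x :=
      (innerSL ℝ p).contDiff.contDiffAt
    have hloc : IsLocalMin (fun y => v y - innerSL ℝ p y) x := by
      have := hxmin.isLocalMin (Filter.mem_of_superset (hD.mem_nhds hxD) hDK)
      simpa using this
    have hev : ∀ᶠ y in nhds x, fderiv ℝ (fun y => v y - innerSL ℝ p y) y =
        fderiv ℝ v y - innerSL ℝ p := by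
      filter_upwards [hC.eventually (by simp)] with y hy
      rw [fderiv_fun_sub (hy.differentiableAt (by norm_num)) (by fun_prop)]
      rw [ContinuousLinearMap.fderiv]
    have hzero := hloc.fderiv_eq_zero
    rw [hev.self_of_nhds, sub_eq_zero] at hzero
    have hsnd := qs_second (hC.sub hlin) hloc
    have hsnd2 : fderiv ℝ (fderiv ℝ (fun y => v y - innerSL ℝ p y)) x =
        fderiv ℝ (fderiv ℝ v) x := by
      rw [Filter.EventuallyEq.fderiv_eq hev, fderiv_sub_const]
    refine ⟨x, ⟨hxD, ?_, ?_⟩, ?_⟩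
    · rw [hzero]; simpa using hpt.le
    · intro z
      have := hsnd z
      rwa [hsnd2] at this
    · rw [qsGrad, hzero]
      ext j
      rw [qsPhi_apply]
      simp [EuclideanSpace.inner_single_right]
  have hle : ∀ x ∈ Γ₀, ENNReal.ofReal |(qsGrad' n v x).det| ≤
      ENNReal.ofReal ((hess n v x).trace ^ n) := by
    intro x hx
    rw [qs_grad_det (qs_diff_fderiv (hvD x hx.1))]
    exact ENNReal.ofReal_le_ofReal (qs_det_le (hpsd x hx))
  calc _ ≤ volume (qsGrad n v '' Γ₀) := measure_mono himg
    _ ≤ ∫⁻ x in Γ₀, ENNReal.ofReal |(qsGrad' n v x).det| :=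
        addHaar_image_le_lintegral_abs_det_fderiv volume hΓ₀m fun x hx =>
          (qs_grad_hasFDeriv (qs_diff_fderiv (hvD x hx.1))).hasFDerivWithinAt
    _ ≤ ∫⁻ x in Γ₀, ENNReal.ofReal ((hess n v x).trace ^ n) :=
        setLIntegral_mono' hΓ₀m hle
    _ = (∫⁻ x in Γ, ENNReal.ofReal ((hess n v x).trace ^ n)) +
        ∫⁻ x in Γ₀ \ (D ∩ {x | 0 < (hess n v x).trace}),
          ENNReal.ofReal ((hess n v x).trace ^ n) := 
        (lintegral_inter_add_sdiff _ _ hpos).symm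
    _ = ∫⁻ x in Γ, ENNReal.ofReal ((hess n v x).trace ^ n) := by
        have : ∫⁻ x in Γ₀ \ (D ∩ {x | 0 < (hess n v x).trace}),
          ENNReal.ofReal ((hess n v x).trace ^ n) = ∫⁻ x in Γ₀ \ (D ∩ {x | 0 < (hess n v x).trace}), 0 := by
          refine setLIntegral_congr_fun (hΓ₀m.diff hpos) fun x hx => ?_
          have h1 := (hpsd x hx.1).trace_nonneg
          have h2 : ¬ 0 < (hess n v x).trace := fun h => hx.2 ⟨hx.1.1, h⟩
          have h3 : (hess n v x).trace = 0 := by linarith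
          simp [h3, show n ≠ 0 by omega]
        rw [this]; simp

/-- half of `1 - |x|²` -/
noncomputable def qsS (n : ℕ) (x : EuclideanSpace ℝ (Fin n)) : ℝ := (1 - ‖x‖ ^ 2) / 2

/-- the barrier -/
noncomputable def qsPsi (n : ℕ) (m κ r μ : ℝ) (x₀ x : EuclideanSpace ℝ (Fin n)) : ℝ :=
  m * ((1 - κ) * qsS n x + κ / r * qsS n x ^ 2 - μ * ‖x - x₀‖ ^ 2)

lemma qsS_hasFDeriv {n : ℕ} (y : EuclideanSpace ℝ (Fin n)) :
    HasFDerivAt (qsS n) (-(innerSL ℝ y)) y := by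
  have h := (hasStrictFDerivAt_norm_sq y).hasFDerivAt
  have h2 := ((h.const_sub 1).mul_const (1 / 2 : ℝ))
  have : qsS n = fun y => (1 - ‖y‖ ^ 2) * (1 / 2) := by
    ext y; simp [qsS]; ring
  rw [this]
  refine h2.congr_fderiv ?_
  ext z; simp

lemma qsS_contDiff {n : ℕ} : ContDiff ℝ 2 (qsS n) := by
  unfold qsS
  have : ContDiff ℝ 2 (fun x : EuclideanSpace ℝ (Fin n) => ‖x‖ ^ 2) := contDiff_norm_sq ℝ
  fun_prop

lemma qsPsi_contDiff {n : ℕ} (m κ r μ : ℝ) (x₀ : EuclideanSpace ℝ (Fin n)) :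
    ContDiff ℝ 2 (qsPsi n m κ r μ x₀) := by
  unfold qsPsi
  have h1 : ContDiff ℝ 2 (fun x : EuclideanSpace ℝ (Fin n) => ‖x - x₀‖ ^ 2) :=
    (contDiff_norm_sq ℝ).comp (contDiff_id.sub contDiff_const)
  have h2 := qsS_contDiff (n := n)
  fun_prop

lemma qsPsi_fderiv {n : ℕ} (m κ r μ : ℝ) (x₀ y : EuclideanSpace ℝ (Fin n)) :
    fderiv ℝ (qsPsi n m κ r μ x₀) y = -(m * ((1 - κ) + 2 * (κ / r) * qsS n y)) • innerSL ℝ y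
      - (2 * m * μ) • innerSL ℝ (y - x₀) := by
  have hs := qsS_hasFDeriv y
  have hs2 := hs.pow 2
  have h0 : HasFDerivAt (fun x : EuclideanSpace ℝ (Fin n) => ‖x - x₀‖ ^ 2)
      (2 • innerSL ℝ (y - x₀)) y := by
    have := (hasStrictFDerivAt_norm_sq (y - x₀)).hasFDerivAt.comp y
      ((hasFDerivAt_id y).sub_const x₀)
    refine HasFDerivAt.congr_fderiv (f := fun x => ‖x - x₀‖ ^ 2) this ?_
    ext z; simp
  have h := (((hs.const_mul (1 - κ)).add (hs2.const_mul (κ / r))).sub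
    (h0.const_mul μ)).const_mul m
  have h' : HasFDerivAt (qsPsi n m κ r μ x₀) _ y := h
  rw [h'.fderiv]
  ext z
  simp
  ring

lemma qsPsi_fderiv_norm {n : ℕ} {m κ r μ ρ : ℝ} {x₀ y : EuclideanSpace ℝ (Fin n)}
    (hm : 0 ≤ m) (hκ : 0 ≤ κ) (hκ1 : κ ≤ 1) (hr : 0 < r) (hμ : 0 ≤ μ)
    (hs : 0 ≤ qsS n y) (hsr : qsS n y ≤ r) (hy : ‖y‖ ≤ 1) (hyx : ‖y - x₀‖ ≤ ρ) :
    ‖fderiv ℝ (qsPsi n m κ r μ x₀) y‖ ≤ m * (1 + κ + 2 * μ * ρ) := by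
  rw [qsPsi_fderiv]
  have h1 : 0 ≤ κ / r * qsS n y := by positivity
  have h2 : κ / r * qsS n y ≤ κ := by
    calc κ / r * qsS n y ≤ κ / r * r := by gcongr
      _ = κ := by field_simp
  have h3 : 0 ≤ m * ((1 - κ) + 2 * (κ / r) * qsS n y) := by
    apply mul_nonneg hm; linarith
  calc _ ≤ ‖-(m * ((1 - κ) + 2 * (κ / r) * qsS n y)) • innerSL ℝ y‖
      + ‖(2 * m * μ) • innerSL ℝ (y - x₀)‖ := norm_sub_le _ _
    _ = (m * ((1 - κ) + 2 * (κ / r) * qsS n y)) * ‖y‖ + (2 * m * μ) * ‖y - x₀‖ := by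
      rw [norm_smul, norm_smul, innerSL_apply_norm, innerSL_apply_norm, norm_neg,
        Real.norm_of_nonneg h3, Real.norm_of_nonneg (by positivity)]
    _ ≤ (m * (1 + κ)) * 1 + (2 * m * μ) * ρ := by
      have : (m * ((1 - κ) + 2 * (κ / r) * qsS n y)) ≤ m * (1 + κ) := by
        apply mul_le_mul_of_nonneg_left _ hm; linarith
      gcongr
    _ = _ := by ring

lemma qsPsi_hess {n : ℕ} (m κ r μ : ℝ) (x₀ x : EuclideanSpace ℝ (Fin n)) :
    hess n (qsPsi n m κ r μ x₀) x =
      -(m * ((1 - κ) + 2 * (κ / r) * qsS n x + 2 * μ)) • (1 : Matrix (Fin n) (Fin n) ℝ)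
      + (2 * m * (κ / r)) • Matrix.vecMulVec (fun i => x i) (fun i => x i) := by
  ext i j
  unfold hess
  have hf : (fun y => fderiv ℝ (qsPsi n m κ r μ x₀) y (EuclideanSpace.single j (1 : ℝ))) =
      fun y => -(m * ((1 - κ) + 2 * (κ / r) * qsS n y)) * EuclideanSpace.proj (𝕜 := ℝ) j y
        - (2 * m * μ) * (EuclideanSpace.proj (𝕜 := ℝ) j y - x₀ j) := by
    ext y
    rw [qsPsi_fderiv]
    simp [EuclideanSpace.inner_single_right]
  rw [hf]
  have hs := qsS_hasFDeriv x
  have hp : HasFDerivAt (fun y : EuclideanSpace ℝ (Fin n) => EuclideanSpace.proj (𝕜 := ℝ) j y)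
    (EuclideanSpace.proj (𝕜 := ℝ) j) x :=
    (EuclideanSpace.proj (𝕜 := ℝ) j : EuclideanSpace ℝ (Fin n) →L[ℝ] ℝ).hasFDerivAt
  have h := ((((hs.const_mul (2 * (κ / r))).const_add (1 - κ)).const_mul m).neg.mul hp).sub
    ((hp.sub_const (x₀ j)).const_mul (2 * m * μ))
  have h' : HasFDerivAt (fun y : EuclideanSpace ℝ (Fin n) => -(m * ((1 - κ) + 2 * (κ / r) * qsS n y)) * EuclideanSpace.proj (𝕜 := ℝ) j y
        - (2 * m * μ) * (EuclideanSpace.proj (𝕜 := ℝ) j y - x₀ j)) _ x := h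
  rw [h'.fderiv]
  by_cases hij : i = j
  · subst hij
    simp [EuclideanSpace.inner_single_right, Matrix.vecMulVec_apply]
    ring
  · simp [EuclideanSpace.inner_single_right, Matrix.vecMulVec_apply, hij, Ne.symm hij, eq_comm]
    ring

lemma qsPsi_trace {n : ℕ} {lam Lam m κ r μ : ℝ} {x₀ x : EuclideanSpace ℝ (Fin n)}
    (hm : 0 ≤ m) (hκ : 0 ≤ κ) (hκ1 : κ ≤ 1) (hr : 0 < r) (hμ : 0 ≤ μ) (hLam : 0 ≤ Lam)
    (hs : 0 ≤ qsS n x) (hsr : qsS n x ≤ r)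
    {A : Matrix (Fin n) (Fin n) ℝ} 
    (h1 : (A - lam • (1 : Matrix (Fin n) (Fin n) ℝ)).PosSemidef)
    (h2 : (Lam • (1 : Matrix (Fin n) (Fin n) ℝ) - A).PosSemidef) :
    m * (2 * (κ / r) * lam * ‖x‖ ^ 2 - n * Lam * (1 + κ + 2 * μ)) ≤
      (A * hess n (qsPsi n m κ r μ x₀) x).trace := by
  rw [qsPsi_hess]
  have ha := h2.trace_nonneg
  rw [Matrix.trace_sub, Matrix.trace_smul, Matrix.trace_one, Fintype.card_fin, smul_eq_mul] at ha
  have hb := h1.dotProduct_mulVec_nonneg (fun i => x i)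
  simp only [star_trivial] at hb
  rw [Matrix.sub_mulVec, dotProduct_sub, Matrix.smul_mulVec, Matrix.one_mulVec,
    dotProduct_smul, smul_eq_mul] at hb
  have hx : (fun i => x i) ⬝ᵥ (fun i => x i) = ‖x‖ ^ 2 := by
    rw [EuclideanSpace.norm_sq_eq]
    simp [dotProduct, sq]
  rw [hx] at hb
  have hs1 : 0 ≤ κ / r * qsS n x := by positivity
  have hs2 : κ / r * qsS n x ≤ κ := by
    calc κ / r * qsS n x ≤ κ / r * r := by gcongr
      _ = κ := by field_simp
  rw [Matrix.mul_add, Matrix.trace_add, Matrix.mul_smul, Matrix.mul_smul, Matrix.trace_smul,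
    Matrix.trace_smul, Matrix.mul_one, Matrix.mul_vecMulVec, Matrix.trace_vecMulVec]
  rw [dotProduct_comm] at hb
  rw [smul_eq_mul, smul_eq_mul]
  have e1 : ((1 - κ) + 2 * (κ / r) * qsS n x + 2 * μ) * A.trace ≤ (1 + κ + 2 * μ) * (n * Lam) := by
    calc _ ≤ ((1 - κ) + 2 * (κ / r) * qsS n x + 2 * μ) * (n * Lam) := by
          apply mul_le_mul_of_nonneg_left <;> linarith
      _ ≤ _ := by
          apply mul_le_mul_of_nonneg_right
          · linarith
          · positivity
  have e2 : (κ / r) * (lam * ‖x‖ ^ 2) ≤ (κ / r) * (A.mulVec (fun i => x i) ⬝ᵥ fun i => x i) := by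
    apply mul_le_mul_of_nonneg_left
    · linarith [hb, dotProduct_comm (A.mulVec (fun i => x i)) (fun i => x i)]
    · positivity
  have e3 := mul_le_mul_of_nonneg_left e1 hm
  have e4 := mul_le_mul_of_nonneg_left e2 hm
  linarith

/-- the differential inequality at a contact point -/
lemma qs_contact {n : ℕ} {lam Lam m κ r μ ρ t b₀ f₀ : ℝ} {x₀ x : EuclideanSpace ℝ (Fin n)}
    {u : EuclideanSpace ℝ (Fin n) → ℝ}
    (hlam : 0 < lam) (hLam : lam ≤ Lam)
    (hm : 0 ≤ m) (hκ : 0 ≤ κ) (hκ1 : κ ≤ 1) (hr : 0 < r) (hμ : 0 ≤ μ)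
    (hs : 0 ≤ qsS n x) (hsr : qsS n x ≤ r) (hx1 : ‖x‖ ≤ 1) (hxx : ‖x - x₀‖ ≤ ρ)
    (hu : ContDiffAt ℝ 2 u x) (hb : 0 ≤ b₀)
    (hpde : pucciMinus n lam Lam (hess n u x) - b₀ * gradNorm n u x ≤ -f₀)
    (hD : ‖fderiv ℝ (fun y => u y - qsPsi n m κ r μ x₀ y) x‖ ≤ t)
    (hP : (hess n (fun y => u y - qsPsi n m κ r μ x₀ y) x).PosSemidef) :
    lam * (hess n (fun y => u y - qsPsi n m κ r μ x₀ y) x).trace +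
      m * (2 * (κ / r) * lam * ‖x‖ ^ 2 - n * Lam * (1 + κ + 2 * μ)) ≤
        b₀ * (m * (1 + κ + 2 * μ * ρ) + t) - f₀ := by
  set ψ := qsPsi n m κ r μ x₀ with hψ
  have hψC : ContDiffAt ℝ 2 ψ x := (qsPsi_contDiff m κ r μ x₀).contDiffAt
  have hfd : fderiv ℝ (fun y => u y - ψ y) =ᶠ[nhds x] fun y => fderiv ℝ u y - fderiv ℝ ψ y := by
    filter_upwards [hu.eventually (by simp)] with y hy
    exact fderiv_fun_sub (hy.differentiableAt (by norm_num))
      ((qsPsi_contDiff m κ r μ x₀).differentiable (by norm_num) y)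
  have hh : hess n u x = hess n (fun y => u y - ψ y) x + hess n ψ x := by
    ext i j
    rw [Matrix.add_apply, qs_hess_apply (qs_diff_fderiv (hu.sub hψC)),
      qs_hess_apply (qs_diff_fderiv hu), qs_hess_apply (qs_diff_fderiv hψC),
      hfd.fderiv_eq, fderiv_fun_sub (qs_diff_fderiv hu) (qs_diff_fderiv hψC)]
    simp
  have h1 := qs_pucci hLam hP _ (fun A hA1 hA2 =>
    qsPsi_trace (x₀ := x₀) hm hκ hκ1 hr hμ (hlam.le.trans hLam) hs hsr hA1 hA2)
  rw [← hψ, ← hh] at h1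
  have h2 : gradNorm n u x ≤ m * (1 + κ + 2 * μ * ρ) + t := by
    unfold gradNorm
    have : fderiv ℝ u x = fderiv ℝ ψ x + fderiv ℝ (fun y => u y - ψ y) x := by
      rw [hfd.self_of_nhds]; exact (add_sub_cancel _ _).symm
    rw [this]
    exact (norm_add_le _ _).trans (add_le_add (qsPsi_fderiv_norm hm hκ hκ1 hr hμ hs hsr hx1 hxx) hD)
  have h3 := mul_le_mul_of_nonneg_left h2 hb
  linarith

lemma qs_young {n : ℕ} {q a M : ℝ} (hq : (n : ℝ) < q) (ha : 0 ≤ a) (hM : 0 < M) :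
    a ^ n ≤ M ^ n + M ^ ((n : ℝ) - q) * a ^ q := by
  rcases le_total a M with h | h
  · have : 0 ≤ M ^ ((n : ℝ) - q) * a ^ q := by positivity
    have := pow_le_pow_left₀ ha h n
    linarith
  · have ha' : 0 < a := hM.trans_le h
    have h1 : a ^ ((n : ℝ) - q) ≤ M ^ ((n : ℝ) - q) :=
      Real.rpow_le_rpow_of_nonpos hM h (by linarith)
    have h2 : a ^ n = a ^ ((n : ℝ) - q) * a ^ q := by
      rw [← Real.rpow_add ha', sub_add_cancel, Real.rpow_natCast]
    have h3 : 0 ≤ M ^ n := by positivity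
    have h4 : 0 ≤ a ^ q := by positivity
    rw [h2]
    nlinarith [mul_le_mul_of_nonneg_right h1 h4]

lemma qs_LpNorm {n : ℕ} {q K : ℝ} (hq : 0 < q) (hK : 0 < K) {b : EuclideanSpace ℝ (Fin n) → ℝ}
    {E : Set (EuclideanSpace ℝ (Fin n))}
    (h : LpNormE n q b E ≤ ENNReal.ofReal K) :
    ∫⁻ x in E, ENNReal.ofReal (|b x| ^ q) ≤ ENNReal.ofReal (K ^ q) := by
  unfold LpNormE at h
  have := ENNReal.rpow_le_rpow h hq.le
  rw [← ENNReal.rpow_mul, one_div, inv_mul_cancel₀ hq.ne', ENNReal.rpow_one,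
    ENNReal.ofReal_rpow_of_pos hK] at this
  exact this

lemma qs_int {n : ℕ} {q K M V : ℝ} (hq : (n : ℝ) < q) (hM : 0 < M) (hK : 0 < K)
    (hV : 0 ≤ V)
    {b : EuclideanSpace ℝ (Fin n) → ℝ}
    {Γ : Set (EuclideanSpace ℝ (Fin n))} (hΓ : MeasurableSet Γ) (hΓB : Γ ⊆ Metric.ball 0 1)
    (hb0 : ∀ x ∈ Metric.ball (0 : EuclideanSpace ℝ (Fin n)) 1, 0 ≤ b x)
    (hbK : LpNormE n q b (Metric.ball 0 1) ≤ ENNReal.ofReal K)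
    (hvol : volume Γ ≤ ENNReal.ofReal V) :
    ∫⁻ x in Γ, ENNReal.ofReal (b x ^ n) ≤
      ENNReal.ofReal (M ^ n * V + M ^ ((n : ℝ) - q) * K ^ q) := by
  have hq0 : 0 < q := lt_of_le_of_lt (Nat.cast_nonneg n) hq
  have h0 := qs_LpNorm hq0 hK hbK
  calc ∫⁻ x in Γ, ENNReal.ofReal (b x ^ n)
      ≤ ∫⁻ x in Γ, (ENNReal.ofReal (M ^ n) +
          ENNReal.ofReal (M ^ ((n : ℝ) - q)) * ENNReal.ofReal (|b x| ^ q)) := by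
        refine setLIntegral_mono' hΓ fun x hx => ?_
        rw [← ENNReal.ofReal_mul (by positivity), ← ENNReal.ofReal_add (by positivity)
          (by positivity), abs_of_nonneg (hb0 x (hΓB hx))]
        exact ENNReal.ofReal_le_ofReal (qs_young hq (hb0 x (hΓB hx)) hM)
    _ = ENNReal.ofReal (M ^ n) * volume Γ + ENNReal.ofReal (M ^ ((n : ℝ) - q)) *
          ∫⁻ x in Γ, ENNReal.ofReal (|b x| ^ q) := by
        rw [lintegral_add_left measurable_const, lintegral_const_mul' _ _ ENNReal.ofReal_ne_top]
        simp
    _ ≤ ENNReal.ofReal (M ^ n) * ENNReal.ofReal V + ENNReal.ofReal (M ^ ((n : ℝ) - q)) *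
          ENNReal.ofReal (K ^ q) := by
        have := (lintegral_mono_set hΓB (f := fun x => ENNReal.ofReal (|b x| ^ q))).trans h0
        gcongr
    _ = _ := by
        rw [← ENNReal.ofReal_mul (by positivity), ← ENNReal.ofReal_mul (by positivity),
          ← ENNReal.ofReal_add (by positivity) (by positivity)]

/-- volume of the unit ball -/
noncomputable def qsOm (n : ℕ) : ℝ := (volume (Metric.ball (0 : EuclideanSpace ℝ (Fin n)) 1)).toReal

lemma qsOm_pos (n : ℕ) : 0 < qsOm n :=
  ENNReal.toReal_pos (Metric.measure_ball_pos _ _ one_pos).ne' measure_ball_lt_top.ne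

lemma qs_vol_ball {n : ℕ} (x : EuclideanSpace ℝ (Fin n)) {t : ℝ} (ht : 0 < t) :
    volume (Metric.ball x t) = ENNReal.ofReal (t ^ n * qsOm n) := by
  rw [Measure.addHaar_ball_of_pos volume x ht, finrank_euclideanSpace, Fintype.card_fin,
    ENNReal.ofReal_mul (by positivity), qsOm, ENNReal.ofReal_toReal measure_ball_lt_top.ne]

lemma qsS_continuous {n : ℕ} : Continuous (qsS n) := qsS_contDiff.continuous

lemma qsS_pos_iff {n : ℕ} {x : EuclideanSpace ℝ (Fin n)} :
    0 < qsS n x ↔ x ∈ Metric.ball (0 : EuclideanSpace ℝ (Fin n)) 1 := by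
  rw [mem_ball_zero_iff, qsS]
  have := norm_nonneg x
  constructor
  · intro h; nlinarith
  · intro h; nlinarith

set_option maxHeartbeats 1000000 in
lemma qs_step {n : ℕ} (hn : 1 ≤ n) {lam Lam q K m r ρ κ e M : ℝ} (hlam : 0 < lam)
    (hLam : lam ≤ Lam) (hq : (n : ℝ) < q) (hK : 0 < K) (hm : 0 < m)
    (hr : 0 < r) (hr4 : r ≤ 1 / 4) (hrρ : r ≤ ρ) (hκ : 0 ≤ κ) (hκ1 : κ ≤ 1) (he : 0 < e)
    (he1 : e ≤ 1) (hM : 0 < M)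
    (hκr : n * Lam * (2 + 2 * (r / ρ ^ 2)) ≤ κ / r * lam)
    (hsmall : (6 / lam) ^ n * (M ^ n * (ρ ^ n * qsOm n) + M ^ ((n : ℝ) - q) * K ^ q) <
      (e * r / (4 * ρ)) ^ n * qsOm n)
    {b u : EuclideanSpace ℝ (Fin n) → ℝ}
    (hb0 : ∀ x ∈ Metric.ball (0 : EuclideanSpace ℝ (Fin n)) 1, 0 ≤ b x)
    (hbK : LpNormE n q b (Metric.ball 0 1) ≤ ENNReal.ofReal K)
    (hu : ContDiffOn ℝ 2 u (Metric.ball 0 1))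
    (hu0 : ∀ x ∈ Metric.ball (0 : EuclideanSpace ℝ (Fin n)) 1, 0 ≤ u x)
    (hpde : ∀ x ∈ Metric.ball (0 : EuclideanSpace ℝ (Fin n)) 1,
          pucciMinus n lam Lam (hess n u x) - b x * gradNorm n u x ≤ 0)
    (hprev : ∀ x ∈ Metric.ball (0 : EuclideanSpace ℝ (Fin n)) 1, r ≤ qsS n x → m * qsS n x ≤ u x)
    {x₀ : EuclideanSpace ℝ (Fin n)} (hx₀r : r / 2 ≤ qsS n x₀)
    (hx₀r' : qsS n x₀ < r) : m * (1 - κ - e) * qsS n x₀ ≤ u x₀ := by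
  by_contra! hcon
  have hρ : 0 < ρ := hr.trans_le hrρ
  set μ := r / ρ ^ 2 with hμ
  have hμ0 : 0 ≤ μ := by positivity
  have hμρ2 : μ * ρ ^ 2 = r := by rw [hμ]; field_simp
  have hμρ : μ * ρ ≤ 1 := by
    have : μ * ρ = r / ρ := by rw [hμ]; field_simp
    rw [this, div_le_one hρ]; exact hrρ
  set η := e * r / 4 with hη
  have hη0 : 0 < η := by positivity
  have hηr : η < r / 2 := by rw [hη]; nlinarith
  set τ := e * r / (4 * ρ) with hτ
  have hτ0 : 0 < τ := by positivity
  have hτρ : τ * ρ = η := by rw [hτ, hη]; field_simp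
  have hτ1 : τ ≤ 1 := by
    rw [hτ, div_le_one (by positivity)]; nlinarith
  set ψ := qsPsi n m κ r μ x₀ with hψ
  set v : EuclideanSpace ℝ (Fin n) → ℝ := fun y => u y - ψ y with hv
  set Kc : Set (EuclideanSpace ℝ (Fin n)) := {x | ‖x - x₀‖ ≤ ρ ∧ η ≤ qsS n x ∧ qsS n x ≤ r} with hKc
  set D : Set (EuclideanSpace ℝ (Fin n)) := {x | ‖x - x₀‖ < ρ ∧ η < qsS n x ∧ qsS n x < r} with hD
  have hcS := qsS_continuous (n := n)
  have hcN : Continuous (fun x : EuclideanSpace ℝ (Fin n) => ‖x - x₀‖) := by fun_prop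
  have hKcB : Kc ⊆ Metric.ball 0 1 := fun x hx => qsS_pos_iff.mp (hη0.trans_le hx.2.1)
  have hDK : D ⊆ Kc := fun x hx => ⟨hx.1.le, hx.2.1.le, hx.2.2.le⟩
  have hKcompact : IsCompact Kc := by
    refine Metric.isCompact_of_isClosed_isBounded ?_ (Metric.isBounded_ball.subset hKcB)
    exact (isClosed_le hcN continuous_const).inter
      ((isClosed_le continuous_const hcS).inter (isClosed_le hcS continuous_const))
  have hDopen : IsOpen D := (isOpen_lt hcN continuous_const).inter
      ((isOpen_lt continuous_const hcS).inter (isOpen_lt hcS continuous_const))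
  have hx₀D : x₀ ∈ D := ⟨by simpa using hρ, by linarith, hx₀r'⟩
  have hψle : ∀ x ∈ Kc, ψ x ≤ m * (qsS n x - μ * ‖x - x₀‖ ^ 2) := by
    intro x hx
    rw [hψ, qsPsi]
    apply mul_le_mul_of_nonneg_left _ hm.le
    have h1 : κ / r * qsS n x ^ 2 ≤ κ * qsS n x := by
      have h2 : κ / r * qsS n x ≤ κ := by
        calc κ / r * qsS n x ≤ κ / r * r := by gcongr; exact hx.2.2
          _ = κ := by field_simp
      nlinarith [hη0.trans_le hx.2.1]
    linarith
  have hv0 : v x₀ + m * τ * ρ < -(m * η) := by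
    have h1 : m * (1 - κ) * qsS n x₀ ≤ ψ x₀ := by
      have : ψ x₀ = m * (1 - κ) * qsS n x₀ + m * (κ / r * qsS n x₀ ^ 2) := by
        rw [hψ, qsPsi]; simp; ring
      rw [this]
      have : 0 ≤ m * (κ / r * qsS n x₀ ^ 2) := by positivity
      linarith
    have h2 : m * e * (r / 2) ≤ m * e * qsS n x₀ := by gcongr
    have h3 : m * τ * ρ = m * η := by rw [mul_assoc, hτρ]
    have h4 : m * η = m * e * r / 4 := by rw [hη]; ring
    simp only [hv]
    rw [h3]
    linarith
  have hbd : ∀ x ∈ Kc, x ∉ D → v x₀ + m * τ * ρ < v x := by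
    intro x hx hxD
    refine lt_of_lt_of_le hv0 ?_
    have hux := hu0 x (hKcB hx)
    have hψx := hψle x hx
    have hmη : 0 ≤ m * η := by positivity
    have hquad : 0 ≤ m * (μ * ‖x - x₀‖ ^ 2) := by positivity
    rw [mul_sub] at hψx
    simp only [hv]
    by_cases h1 : ‖x - x₀‖ < ρ
    · by_cases h2 : η < qsS n x
      · have h3 : qsS n x = r := by
          by_contra h3
          exact hxD ⟨h1, h2, lt_of_le_of_ne hx.2.2 h3⟩
        have := hprev x (hKcB hx) h3.ge
        linarith
      · have h3 : qsS n x = η := le_antisymm (not_lt.mp h2) hx.2.1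
        rw [h3] at hψx
        linarith
    · have h3 : ‖x - x₀‖ = ρ := le_antisymm hx.1 (not_lt.mp h1)
      rw [h3, hμρ2] at hψx
      have := mul_le_mul_of_nonneg_left hx.2.2 hm.le
      linarith
  have hvC : ContDiffOn ℝ 2 v (Metric.ball 0 1) := hu.sub (qsPsi_contDiff m κ r μ x₀).contDiffOn
  obtain ⟨Γ, hΓm, hΓD, hΓ, hvol⟩ := qs_abp hn hvC hKcompact hKcB hDopen hDK hx₀D
    (mul_pos hm hτ0) (fun x hx => hx.1) hbd
  have hΓB : Γ ⊆ Metric.ball 0 1 := hΓD.trans (hDK.trans hKcB)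
  have htr : ∀ x ∈ Γ, (hess n v x).trace ≤ 6 * m / lam * b x := by
    intro x hx
    obtain ⟨h1, h2, h3⟩ := hΓ x hx
    have hxD := hΓD hx
    have hxB := hΓB hx
    have hbx := hb0 x hxB
    have hs0 : 0 < qsS n x := qsS_pos_iff.mpr hxB
    have hx2 : 1 / 2 ≤ ‖x‖ ^ 2 := by
      have h := hxD.2.2
      unfold qsS at h
      linarith
    have := qs_contact (f₀ := 0) hlam hLam hm.le hκ hκ1 hr hμ0 hs0.le hxD.2.2.le
      (by simpa using (mem_ball_zero_iff.mp hxB).le) hxD.1.le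
      (hu.contDiffAt (Metric.isOpen_ball.mem_nhds hxB)) hbx (by simpa using hpde x hxB) h1 h2
    have e1 : 0 ≤ 2 * (κ / r) * lam * ‖x‖ ^ 2 - n * Lam * (1 + κ + 2 * μ) := by
      have e2 : κ / r * lam * (1 / 2) ≤ κ / r * lam * ‖x‖ ^ 2 := by gcongr
      have hL : 0 < Lam := hlam.trans_le hLam
      have e3 : n * Lam * (1 + κ + 2 * μ) ≤ n * Lam * (2 + 2 * μ) := by
        gcongr; linarith
      linarith
    have e2 := mul_nonneg hm.le e1
    have e3 : b x * (m * (1 + κ + 2 * μ * ρ) + m * τ) ≤ b x * (6 * m) := by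
      apply mul_le_mul_of_nonneg_left _ hbx
      nlinarith
    rw [div_mul_eq_mul_div, le_div_iff₀ hlam]
    linarith
  have hVΓ : volume Γ ≤ ENNReal.ofReal (ρ ^ n * qsOm n) := by
    rw [← qs_vol_ball x₀ hρ]
    refine measure_mono fun x hx => ?_
    rw [mem_ball_iff_norm]
    exact (hΓD hx).1
  have hom := qsOm_pos n
  have hIntB := qs_int hq hM hK (by positivity) hΓm hΓB hb0 hbK hVΓ
  have hfin : ENNReal.ofReal ((m * τ) ^ n * qsOm n) ≤ ENNReal.ofReal ((6 * m / lam) ^ n *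
      (M ^ n * (ρ ^ n * qsOm n) + M ^ ((n : ℝ) - q) * K ^ q)) := by
    rw [← qs_vol_ball 0 (mul_pos hm hτ0)]
    refine hvol.trans ?_
    calc _ ≤ ∫⁻ x in Γ, ENNReal.ofReal ((6 * m / lam) ^ n) * ENNReal.ofReal (b x ^ n) := by
          refine setLIntegral_mono' hΓm fun x hx => ?_
          rw [← ENNReal.ofReal_mul (by positivity), ← mul_pow]
          exact ENNReal.ofReal_le_ofReal (pow_le_pow_left₀ (hΓ x hx).2.2.le (htr x hx) n)
      _ = ENNReal.ofReal ((6 * m / lam) ^ n) * ∫⁻ x in Γ, ENNReal.ofReal (b x ^ n) :=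
          lintegral_const_mul' _ _ ENNReal.ofReal_ne_top
      _ ≤ _ := by
          rw [ENNReal.ofReal_mul (by positivity)]
          gcongr
  rw [ENNReal.ofReal_le_ofReal_iff (by positivity)] at hfin
  have hmn : 0 < m ^ n := by positivity
  have e1 : (m * τ) ^ n * qsOm n = m ^ n * (τ ^ n * qsOm n) := by rw [mul_pow]; ring
  have e2 : (6 * m / lam) ^ n = m ^ n * (6 / lam) ^ n := by
    rw [← mul_pow]; congr 1; ring
  rw [e1, e2, mul_assoc] at hfin
  have := le_of_mul_le_mul_left hfin hmn
  linarith

lemma qs_cheb {n : ℕ} {q K s : ℝ} (hq : 0 < q) (hK : 0 < K) (hs : 0 < s)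
    {b : EuclideanSpace ℝ (Fin n) → ℝ} {T : Set (EuclideanSpace ℝ (Fin n))}
    (hT : MeasurableSet T) (hTB : T ⊆ Metric.ball 0 1) (hTs : ∀ x ∈ T, s ≤ b x)
    (hbK : LpNormE n q b (Metric.ball 0 1) ≤ ENNReal.ofReal K) :
    volume T ≤ ENNReal.ofReal ((K / s) ^ q) := by
  have h0 := qs_LpNorm hq hK hbK
  have h1 : ENNReal.ofReal (s ^ q) * volume T ≤ ENNReal.ofReal (K ^ q) := by
    calc _ = ∫⁻ x in T, ENNReal.ofReal (s ^ q) := by simp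
      _ ≤ ∫⁻ x in T, ENNReal.ofReal (|b x| ^ q) := by
          refine setLIntegral_mono' hT fun x hx => ENNReal.ofReal_le_ofReal ?_
          exact Real.rpow_le_rpow hs.le ((hTs x hx).trans (le_abs_self _)) hq.le
      _ ≤ _ := (lintegral_mono_set hTB).trans h0
  have hsq : 0 < s ^ q := by positivity
  rw [Real.div_rpow hK.le hs.le, ENNReal.ofReal_div_of_pos hsq]
  rw [ENNReal.le_div_iff_mul_le (Or.inl (by simpa using hsq)) (Or.inl ENNReal.ofReal_ne_top),
    mul_comm]
  exact h1

set_option maxHeartbeats 1000000 in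
lemma qs_interior_aux {n : ℕ} (hn : 1 ≤ n) {lam Lam q K r₀ c δ M V : ℝ} (hlam : 0 < lam)
    (hLam : lam ≤ Lam) (hq : (n : ℝ) < q) (hK : 0 < K) (hc : 0 < c) (hδ : 0 < δ)
    (hr : 0 < r₀) (hr1 : r₀ ≤ 1) (hM : 0 < M)
    (hcL : n * Lam * c ≤ 1 / 2)
    (hV : δ * qsOm n + (4 * c * K) ^ q ≤ V)
    (hsmall : 4 ^ n * (M ^ n * V + M ^ ((n : ℝ) - q) * K ^ q) + (2 * (n * Lam)) ^ n * V <
      (lam * r₀ / 8) ^ n * qsOm n)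
    {b u : EuclideanSpace ℝ (Fin n) → ℝ}
    (hbc : ContinuousOn b (Metric.ball 0 1))
    (hb0 : ∀ x ∈ Metric.ball (0 : EuclideanSpace ℝ (Fin n)) 1, 0 ≤ b x)
    (hbK : LpNormE n q b (Metric.ball 0 1) ≤ ENNReal.ofReal K)
    (hu : ContDiffOn ℝ 2 u (Metric.ball 0 1))
    (hu0 : ∀ x ∈ Metric.ball (0 : EuclideanSpace ℝ (Fin n)) 1, 0 ≤ u x)
    (hpde : ∀ x ∈ Metric.ball (0 : EuclideanSpace ℝ (Fin n)) 1,
          pucciMinus n lam Lam (hess n u x) - b x * gradNorm n u x ≤ 0)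
    (hmeas : ENNReal.ofReal (1 - δ) * volume (Metric.ball (0 : EuclideanSpace ℝ (Fin n)) 1)
            ≤ volume {x ∈ Metric.ball (0 : EuclideanSpace ℝ (Fin n)) 1 |
                1 ≤ -(pucciMinus n lam Lam (hess n u x) - b x * gradNorm n u x)})
    {x₀ : EuclideanSpace ℝ (Fin n)} (hx₀r : r₀ ≤ qsS n x₀) : c * r₀ / 2 ≤ u x₀ := by
  by_contra! hcon
  have hL : 0 < Lam := hlam.trans_le hLam
  have hq0 : 0 < q := lt_of_le_of_lt (Nat.cast_nonneg n) hq
  have hom := qsOm_pos n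
  have hV0 : 0 ≤ V := le_trans (by positivity) hV
  set η := r₀ / 4 with hη
  have hη0 : 0 < η := by positivity
  set t := c * r₀ / 8 with ht
  have ht0 : 0 < t := by positivity
  have htc : t ≤ c := by rw [ht]; nlinarith
  set ψ := qsPsi n c 0 1 0 x₀ with hψ
  have hψe : ∀ x, ψ x = c * qsS n x := by intro x; rw [hψ, qsPsi]; simp
  set v : EuclideanSpace ℝ (Fin n) → ℝ := fun y => u y - ψ y with hv
  set Kc : Set (EuclideanSpace ℝ (Fin n)) := {x | η ≤ qsS n x} with hKc
  set D : Set (EuclideanSpace ℝ (Fin n)) := {x | η < qsS n x} with hD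
  have hcS := qsS_continuous (n := n)
  have hKcB : Kc ⊆ Metric.ball 0 1 := fun x hx => qsS_pos_iff.mp (hη0.trans_le hx)
  have hDK : D ⊆ Kc := by
    intro x hx
    change η ≤ qsS n x
    exact le_of_lt hx
  have hKcompact : IsCompact Kc :=
    Metric.isCompact_of_isClosed_isBounded (isClosed_le continuous_const hcS)
      (Metric.isBounded_ball.subset hKcB)
  have hDopen : IsOpen D := isOpen_lt continuous_const hcS
  have hx₀D : x₀ ∈ D := by
    change η < qsS n x₀
    rw [hη]; linarith
  have hnorm : ∀ x ∈ Kc, ‖x - x₀‖ ≤ 2 := by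
    intro x hx
    have h1 := mem_ball_zero_iff.mp (hKcB hx)
    have h2 := mem_ball_zero_iff.mp (hKcB (hDK hx₀D))
    have := norm_sub_le x x₀
    linarith
  have hbd : ∀ x ∈ Kc, x ∉ D → v x₀ + t * 2 < v x := by
    intro x hx hxD
    have hux := hu0 x (hKcB hx)
    have hs : qsS n x = η := le_antisymm (not_lt.mp hxD) hx
    simp only [hv, hψe]
    rw [hs, hη, ht]
    have := mul_le_mul_of_nonneg_left hx₀r hc.le
    linarith
  have hvC : ContDiffOn ℝ 2 v (Metric.ball 0 1) := hu.sub (qsPsi_contDiff c 0 1 0 x₀).contDiffOn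
  obtain ⟨Γ, hΓm, hΓD, hΓ, hvol⟩ := qs_abp hn hvC hKcompact hKcB hDopen hDK hx₀D
    ht0 hnorm hbd
  have hΓB : Γ ⊆ Metric.ball 0 1 := hΓD.trans (hDK.trans hKcB)
  have hcontact : ∀ x ∈ Γ, ∀ f₀ : ℝ,
      pucciMinus n lam Lam (hess n u x) - b x * gradNorm n u x ≤ -f₀ →
      lam * (hess n v x).trace ≤ c * (2 * b x + n * Lam) - f₀ := by
    intro x hx f₀ hf
    obtain ⟨h1, h2, h3⟩ := hΓ x hx
    have hxB := hΓB hx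
    have hbx := hb0 x hxB
    have hs0 : 0 < qsS n x := qsS_pos_iff.mpr hxB
    have hs1 : qsS n x ≤ 1 := by unfold qsS; nlinarith [norm_nonneg x]
    have := qs_contact (f₀ := f₀) hlam hLam hc.le le_rfl zero_le_one one_pos le_rfl hs0.le hs1
      (by simpa using (mem_ball_zero_iff.mp hxB).le) (hnorm x (hDK (hΓD hx)))
      (hu.contDiffAt (Metric.isOpen_ball.mem_nhds hxB)) hbx hf h1 h2
    have e3 := mul_le_mul_of_nonneg_left htc hbx
    simp only [← hψ, ← hv] at this
    ring_nf at this ⊢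
    linarith
  have htr : ∀ x ∈ Γ, (hess n v x).trace ≤ c / lam * (2 * b x + n * Lam) := by
    intro x hx
    have := hcontact x hx 0 (by simpa using hpde x (hΓB hx))
    rw [div_mul_eq_mul_div, le_div_iff₀ hlam]
    linarith
  -- the volume of the contact set
  set S := {x ∈ Metric.ball (0 : EuclideanSpace ℝ (Fin n)) 1 |
                1 ≤ -(pucciMinus n lam Lam (hess n u x) - b x * gradNorm n u x)} with hS
  set Tb : Set (EuclideanSpace ℝ (Fin n)) := Metric.ball 0 1 ∩ b ⁻¹' (Set.Ioi (1 / (4 * c)))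
    with hTb
  have hTbm : MeasurableSet Tb :=
    (hbc.isOpen_inter_preimage Metric.isOpen_ball isOpen_Ioi).measurableSet
  have hVTb : volume Tb ≤ ENNReal.ofReal ((4 * c * K) ^ q) := by
    have := qs_cheb hq0 hK (s := 1 / (4 * c)) (by positivity) hTbm Set.inter_subset_left
      (fun x hx => le_of_lt hx.2) hbK
    rwa [show K / (1 / (4 * c)) = 4 * c * K by field_simp] at this
  have hdisj : Disjoint S (Γ \ Tb) := by
    rw [Set.disjoint_left]
    rintro x hxS ⟨hxΓ, hxT⟩
    have h1 := hcontact x hxΓ 1 (by linarith [hxS.2])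
    have h2 := mul_pos hlam (hΓ x hxΓ).2.2
    apply hxT
    refine ⟨hΓB hxΓ, ?_⟩
    change 1 / (4 * c) < b x
    rw [div_lt_iff₀ (by positivity)]
    linarith
  have hVT : volume (Γ \ Tb) ≤ ENNReal.ofReal (δ * qsOm n) := by
    have h1 : volume S + volume (Γ \ Tb) ≤ volume (Metric.ball (0 : EuclideanSpace ℝ (Fin n)) 1) := by
      rw [← measure_union hdisj (hΓm.diff hTbm)]
      exact measure_mono (Set.union_subset (fun x hx => hx.1) (Set.sdiff_subset.trans hΓB))
    have hone := qs_vol_ball (0 : EuclideanSpace ℝ (Fin n)) one_pos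
    rw [one_pow, one_mul] at hone
    rw [hone] at h1 hmeas
    have hTfin : volume (Γ \ Tb) ≠ ⊤ := 
      ne_top_of_le_ne_top ENNReal.ofReal_ne_top (le_trans le_add_self h1)
    rw [← ENNReal.ofReal_toReal hTfin] at h1 ⊢
    have h2 := (add_le_add_left hmeas _).trans h1
    rw [← ENNReal.ofReal_mul' hom.le, ← ENNReal.ofReal_toReal_eq_iff.mpr hTfin] at h2
    apply ENNReal.ofReal_le_ofReal
    by_cases hneg : 0 ≤ 1 - δ
    · rw [ENNReal.ofReal_toReal hTfin, ← ENNReal.ofReal_add (by positivity) ENNReal.toReal_nonneg,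
        ENNReal.ofReal_le_ofReal_iff hom.le] at h2
      linarith
    · have h3 := le_trans le_add_self h1
      rw [ENNReal.ofReal_le_ofReal_iff hom.le] at h3
      nlinarith
  have hVΓ : volume Γ ≤ ENNReal.ofReal V := by
    calc volume Γ ≤ volume ((Γ \ Tb) ∪ Tb) := measure_mono (by
          rw [Set.sdiff_union_self]; exact Set.subset_union_left)
      _ ≤ volume (Γ \ Tb) + volume Tb := measure_union_le _ _
      _ ≤ ENNReal.ofReal (δ * qsOm n) + ENNReal.ofReal ((4 * c * K) ^ q) := add_le_add hVT hVTb
      _ = ENNReal.ofReal (δ * qsOm n + (4 * c * K) ^ q) :=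
          (ENNReal.ofReal_add (by positivity) (by positivity)).symm
      _ ≤ _ := ENNReal.ofReal_le_ofReal hV
  have hIntB := qs_int hq hM hK hV0 hΓm hΓB hb0 hbK hVΓ
  have hfin : ENNReal.ofReal (t ^ n * qsOm n) ≤ ENNReal.ofReal ((c / lam) ^ n *
      (4 ^ n * (M ^ n * V + M ^ ((n : ℝ) - q) * K ^ q) + (2 * (n * Lam)) ^ n * V)) := by
    rw [← qs_vol_ball 0 ht0]
    refine hvol.trans ?_
    calc _ ≤ ∫⁻ x in Γ, ENNReal.ofReal ((c / lam) ^ n) *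
            (ENNReal.ofReal ((2 * (n * Lam)) ^ n) + ENNReal.ofReal (4 ^ n) * ENNReal.ofReal (b x ^ n)) := by
          refine setLIntegral_mono' hΓm fun x hx => ?_
          have hbx := hb0 x (hΓB hx)
          rw [← ENNReal.ofReal_mul (by positivity), ← ENNReal.ofReal_add (by positivity)
            (by positivity), ← ENNReal.ofReal_mul (by positivity)]
          apply ENNReal.ofReal_le_ofReal
          refine (pow_le_pow_left₀ (hΓ x hx).2.2.le (htr x hx) n).trans ?_
          rw [mul_pow]
          apply mul_le_mul_of_nonneg_left _ (by positivity)
          have h1 := add_pow_le (a := 2 * b x) (b := n * Lam) (by positivity) (by positivity) n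
          have h2 : (2 : ℝ) ^ (n - 1) ≤ 2 ^ n := pow_le_pow_right₀ (by norm_num) (by omega)
          have h3 : 0 ≤ (2 * b x) ^ n + (n * Lam) ^ n := by positivity
          have h4 := h1.trans (mul_le_mul_of_nonneg_right h2 h3)
          refine h4.trans (le_of_eq ?_)
          rw [mul_add, ← mul_pow, ← mul_pow, ← mul_pow]
          ring
      _ = ENNReal.ofReal ((c / lam) ^ n) * (ENNReal.ofReal ((2 * (n * Lam)) ^ n) * volume Γ
            + ENNReal.ofReal (4 ^ n) * ∫⁻ x in Γ, ENNReal.ofReal (b x ^ n)) := by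
          rw [lintegral_const_mul' _ _ ENNReal.ofReal_ne_top, lintegral_add_left measurable_const,
            lintegral_const_mul' _ _ ENNReal.ofReal_ne_top]
          simp
      _ ≤ ENNReal.ofReal ((c / lam) ^ n) * (ENNReal.ofReal ((2 * (n * Lam)) ^ n) * ENNReal.ofReal V
            + ENNReal.ofReal (4 ^ n) *
              ENNReal.ofReal (M ^ n * V + M ^ ((n : ℝ) - q) * K ^ q)) := by
          gcongr
      _ = _ := by
          rw [← ENNReal.ofReal_mul (by positivity), ← ENNReal.ofReal_mul (by positivity),
            ← ENNReal.ofReal_add (by positivity) (by positivity),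
            ← ENNReal.ofReal_mul (by positivity), add_comm]
  rw [ENNReal.ofReal_le_ofReal_iff (by positivity)] at hfin
  have hmn : 0 < (c / lam) ^ n := by positivity
  have e1 : t ^ n * qsOm n = (c / lam) ^ n * ((lam * r₀ / 8) ^ n * qsOm n) := by
    rw [← mul_assoc, ← mul_pow, ht]
    congr 2
    field_simp
  rw [e1] at hfin
  have := le_of_mul_le_mul_left hfin hmn
  linarith

lemma qs_interior {n : ℕ} (hn : 1 ≤ n) {lam Lam q K r₀ : ℝ} (hlam : 0 < lam)
    (hLam : lam ≤ Lam) (hq : (n : ℝ) < q) (hK : 0 < K) (hr : 0 < r₀) :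
    ∃ δ c M V : ℝ, 0 < δ ∧ 0 < c ∧ 0 < M ∧ n * Lam * c ≤ 1 / 2 ∧
      δ * qsOm n + (4 * c * K) ^ q ≤ V ∧
      4 ^ n * (M ^ n * V + M ^ ((n : ℝ) - q) * K ^ q) + (2 * (n * Lam)) ^ n * V <
        (lam * r₀ / 8) ^ n * qsOm n := by
  have hL : 0 < Lam := hlam.trans_le hLam
  have hq0 : 0 < q := lt_of_le_of_lt (Nat.cast_nonneg n) hq
  have hn0 : (0 : ℝ) < n := by exact_mod_cast hn
  have hom := qsOm_pos n
  set B := (lam * r₀ / 8) ^ n * qsOm n with hB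
  have hB0 : 0 < B := by positivity
  have htend : Filter.Tendsto (fun M : ℝ => 4 ^ n * K ^ q * M ^ ((n : ℝ) - q)) Filter.atTop
      (nhds 0) := by
    have h := tendsto_rpow_neg_atTop (y := q - n) (by linarith)
    have := h.const_mul (4 ^ n * K ^ q)
    simpa using this
  obtain ⟨M, hMB, hM⟩ := ((htend.eventually (gt_mem_nhds (half_pos hB0))).and
    (Filter.eventually_gt_atTop (0 : ℝ))).exists
  set Q := 4 ^ n * M ^ n + (2 * (n * Lam)) ^ n with hQ
  have hQ0 : 0 < Q := by positivity
  set V := B / (4 * Q) with hV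
  have hV0 : 0 < V := by positivity
  refine ⟨V / 2 / qsOm n, min (1 / (2 * (n * Lam))) ((V / 2) ^ (1 / q) / (4 * K)), M, V,
    by positivity, by positivity, hM, ?_, ?_, ?_⟩
  · calc n * Lam * min (1 / (2 * (n * Lam))) ((V / 2) ^ (1 / q) / (4 * K))
        ≤ n * Lam * (1 / (2 * (n * Lam))) := by gcongr; exact min_le_left _ _
      _ = 1 / 2 := by field_simp
  · have h1 : 4 * min (1 / (2 * (n * Lam))) ((V / 2) ^ (1 / q) / (4 * K)) * K ≤ (V / 2) ^ (1 / q) := by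
      calc _ ≤ 4 * ((V / 2) ^ (1 / q) / (4 * K)) * K := by gcongr; exact min_le_right _ _
        _ = _ := by field_simp
    have h2 := Real.rpow_le_rpow (by positivity) h1 hq0.le
    rw [← Real.rpow_mul (by positivity), one_div_mul_cancel hq0.ne', Real.rpow_one] at h2
    have h3 : V / 2 / qsOm n * qsOm n = V / 2 := by field_simp
    linarith
  · have h1 : Q * V = B / 4 := by rw [hV]; field_simp
    have h2 : 4 ^ n * (M ^ n * V + M ^ ((n : ℝ) - q) * K ^ q) + (2 * (n * Lam)) ^ n * V =
      Q * V + 4 ^ n * K ^ q * M ^ ((n : ℝ) - q) := by rw [hQ]; ring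
    rw [h2, h1]
    linarith

lemma qs_step_consts {n : ℕ} (hn : 1 ≤ n) {lam Lam q K : ℝ} (hlam : 0 < lam)
    (hLam : lam ≤ Lam) (hq : (n : ℝ) < q) (hK : 0 < K) :
    ∃ C₀ C₁ β : ℝ, 0 < C₀ ∧ 0 < C₁ ∧ 0 < β ∧ ∀ r : ℝ, 0 < r → r ≤ 1 / 4 →
      ∃ ρ M : ℝ, r ≤ ρ ∧ 0 < M ∧ 
        n * Lam * (2 + 2 * (r / ρ ^ 2)) ≤ (C₀ * r ^ β) / r * lam ∧
        (6 / lam) ^ n * (M ^ n * (ρ ^ n * qsOm n) + M ^ ((n : ℝ) - q) * K ^ q) <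
          ((C₁ * r ^ β) * r / (4 * ρ)) ^ n * qsOm n := by
  have hL : 0 < Lam := hlam.trans_le hLam
  have hq0 : 0 < q := lt_of_le_of_lt (Nat.cast_nonneg n) hq
  have hn0 : (0 : ℝ) < n := by exact_mod_cast hn
  have hom := qsOm_pos n
  set α := 1 - n / q with hα
  have hα0 : 0 < α := by
    rw [hα, sub_pos, div_lt_one hq0]; exact hq
  have hα1 : α < 1 := by
    have : 0 < n / q := by positivity
    rw [hα]; linarith
  set Z := (qsOm n + K ^ q) / qsOm n with hZ
  have hZ0 : 0 < Z := by positivity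
  refine ⟨4 * n * Lam / lam, 4 * (6 / lam) * (1 + Z), α / 2, by positivity, by positivity,
    by positivity, ?_⟩
  intro r hr hr4
  have hr1 : r ≤ 1 := by linarith
  set ρ := r ^ (1 - α / 4) with hρ
  have hρ0 : 0 < ρ := by positivity
  refine ⟨ρ, ρ ^ (-(n / q)), ?_, by positivity, ?_, ?_⟩
  · calc r = r ^ (1 : ℝ) := (Real.rpow_one r).symm
      _ ≤ ρ := Real.rpow_le_rpow_of_exponent_ge hr hr1 (by linarith)
  · have h1 : r ≤ r ^ (α / 2) := by
      calc r = r ^ (1 : ℝ) := (Real.rpow_one r).symm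
        _ ≤ _ := Real.rpow_le_rpow_of_exponent_ge hr hr1 (by linarith)
    have h2 : r * (r / ρ ^ 2) = r ^ (α / 2) := by
      have e1 : ρ ^ 2 = r ^ (2 - α / 2) := by
        rw [hρ, ← Real.rpow_natCast, ← Real.rpow_mul hr.le]
        congr 1; push_cast; ring
      have e2 : r * r = r ^ (2 : ℝ) := by rw [Real.rpow_two]; ring
      rw [← mul_div_assoc, e2, e1, ← Real.rpow_sub hr]
      congr 1; ring
    have h3 : 4 * n * Lam / lam * r ^ (α / 2) / r * lam = 4 * n * Lam * r ^ (α / 2) / r := by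
      field_simp
    rw [h3, le_div_iff₀ hr]
    have h4 : n * Lam * (2 + 2 * (r / ρ ^ 2)) * r = n * Lam * (2 * r + 2 * (r * (r / ρ ^ 2))) := by
      ring
    rw [h4, h2]
    have : n * Lam * (2 * r + 2 * r ^ (α / 2)) ≤ n * Lam * (2 * r ^ (α / 2) + 2 * r ^ (α / 2)) := by
      gcongr
    linarith
  · have e1 : (ρ ^ (-(n / q))) ^ n * (ρ ^ n * qsOm n) = (ρ ^ α) ^ n * qsOm n := by
      rw [← mul_assoc, ← mul_pow]
      congr 2
      nth_rewrite 2 [← Real.rpow_one ρ]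
      rw [← Real.rpow_add hρ0]
      congr 1; rw [hα]; ring
    have e2 : (ρ ^ (-(n / q))) ^ ((n : ℝ) - q) = (ρ ^ α) ^ n := by
      rw [← Real.rpow_mul hρ0.le, ← Real.rpow_natCast, ← Real.rpow_mul hρ0.le]
      congr 1; rw [hα]; field_simp; ring
    have e3 : 4 * (6 / lam) * (1 + Z) * r ^ (α / 2) * r / (4 * ρ) =
        (6 / lam) * (1 + Z) * r ^ (3 * α / 4) := by
      have : r ^ (3 * α / 4) = r ^ (α / 2) * r / ρ := by
        nth_rewrite 3 [← Real.rpow_one r]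
        rw [hρ, ← Real.rpow_add hr, ← Real.rpow_sub hr]
        congr 1; ring
      rw [this]; field_simp
    have e4 : ρ ^ α ≤ r ^ (3 * α / 4) := by
      rw [hρ, ← Real.rpow_mul hr.le]
      apply Real.rpow_le_rpow_of_exponent_ge hr hr1
      nlinarith
    rw [e1, e2, e3]
    have e5 : qsOm n + K ^ q = Z * qsOm n := by rw [hZ]; field_simp
    have e6 : Z < (1 + Z) ^ n := by
      have := one_add_mul_le_pow (a := Z) (by linarith) n
      have h1 : (1 : ℝ) ≤ n := by exact_mod_cast hn
      nlinarith
    calc (6 / lam) ^ n * ((ρ ^ α) ^ n * qsOm n + (ρ ^ α) ^ n * K ^ q)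
        = (6 / lam) ^ n * (ρ ^ α) ^ n * (Z * qsOm n) := by rw [← e5]; ring
      _ ≤ (6 / lam) ^ n * (r ^ (3 * α / 4)) ^ n * (Z * qsOm n) := by gcongr
      _ < (6 / lam) ^ n * (r ^ (3 * α / 4)) ^ n * ((1 + Z) ^ n * qsOm n) := by gcongr
      _ = _ := by rw [mul_pow, mul_pow]; ring

/-- First step of the quantitative strong maximum principle. -/
theorem qsmp_first_step
    (n : ℕ) (hn : 2 ≤ n) (lam Lam : ℝ) (hlam : 0 < lam) (hLam : lam ≤ Lam)
    (q K : ℝ) (hq : (n : ℝ) < q) (hK : 0 < K) :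
    ∃ δ₁ c₁ : ℝ, 0 < δ₁ ∧ 0 < c₁ ∧
      ∀ b u : EuclideanSpace ℝ (Fin n) → ℝ,
        ContinuousOn b (Metric.ball 0 1) →
        (∀ x ∈ Metric.ball (0 : EuclideanSpace ℝ (Fin n)) 1, 0 ≤ b x) →
        LpNormE n q b (Metric.ball 0 1) ≤ ENNReal.ofReal K →
        ContDiffOn ℝ 2 u (Metric.ball 0 1) →
        (∀ x ∈ Metric.ball (0 : EuclideanSpace ℝ (Fin n)) 1, 0 ≤ u x) →
        (∀ x ∈ Metric.ball (0 : EuclideanSpace ℝ (Fin n)) 1,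
          pucciMinus n lam Lam (hess n u x) - b x * gradNorm n u x ≤ 0) →
        ENNReal.ofReal (1 - δ₁) * volume (Metric.ball (0 : EuclideanSpace ℝ (Fin n)) 1)
            ≤ volume {x ∈ Metric.ball (0 : EuclideanSpace ℝ (Fin n)) 1 |
                1 ≤ -(pucciMinus n lam Lam (hess n u x) - b x * gradNorm n u x)} →
        ∀ x ∈ Metric.ball (0 : EuclideanSpace ℝ (Fin n)) 1, c₁ * (1 - ‖x‖) ≤ u x := by
  have hn1 : 1 ≤ n := by omega
  obtain ⟨C₀, C₁, β, hC₀, hC₁, hβ, hstep⟩ := qs_step_consts hn1 hlam hLam hq hK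
  set θ : ℝ := (1 / 2 : ℝ) ^ β with hθ
  have hθ0 : 0 < θ := by positivity
  have hθ1 : θ < 1 := Real.rpow_lt_one (by norm_num) (by norm_num) hβ
  set r₀ : ℝ := min (1 / 4) (((1 - θ) / (2 * (C₀ + C₁))) ^ (1 / β)) with hr₀
  have h1θ : 0 < 1 - θ := by linarith
  have hr₀0 : 0 < r₀ := by positivity
  have hr₀4 : r₀ ≤ 1 / 4 := min_le_left _ _
  have hr₀C : (C₀ + C₁) * r₀ ^ β ≤ (1 - θ) / 2 := by
    have h1 := Real.rpow_le_rpow hr₀0.le (min_le_right (1 / 4) _ : r₀ ≤ _) hβ.le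
    rw [← Real.rpow_mul (by positivity), one_div_mul_cancel hβ.ne', Real.rpow_one] at h1
    calc _ ≤ (C₀ + C₁) * ((1 - θ) / (2 * (C₀ + C₁))) := by gcongr
      _ = _ := by field_simp
  obtain ⟨δ, c, M₀, V, hδ, hc, hM₀, hcL, hV, hsmall⟩ := qs_interior hn1 hlam hLam hq hK hr₀0
  refine ⟨δ, c * r₀ / 4, hδ, by positivity, ?_⟩
  intro b u hbc hb0 hbK hu hu0 hpde hmeas
  have hmain : ∀ k : ℕ, ∀ x ∈ Metric.ball (0 : EuclideanSpace ℝ (Fin n)) 1,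
      r₀ * (1 / 2) ^ k ≤ qsS n x → c * r₀ * ((1 + θ ^ k) / 2) * qsS n x ≤ u x := by
    intro k
    induction k with
    | zero =>
      intro x hx hxr
      have h1 := qs_interior_aux hn1 hlam hLam hq hK hc hδ hr₀0 (by linarith) hM₀ hcL hV hsmall
        hbc hb0 hbK hu hu0 hpde hmeas (x₀ := x) (by simpa using hxr)
      have h2 : qsS n x ≤ 1 / 2 := by unfold qsS; nlinarith [norm_nonneg x]
      have h3 : c * r₀ * qsS n x ≤ c * r₀ * (1 / 2) := by gcongr
      have h4 : c * r₀ * ((1 + θ ^ 0) / 2) * qsS n x = c * r₀ * qsS n x := by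
        rw [pow_zero]; ring
      linarith
    | succ k ih =>
      intro x hx hxr
      have hs0 : 0 < qsS n x := qsS_pos_iff.mpr hx
      have hθk : 0 < θ ^ k := by positivity
      have hθk1 : θ ^ k ≤ 1 := pow_le_one₀ hθ0.le hθ1.le
      have hθs : θ ^ (k + 1) = θ ^ k * θ := pow_succ _ _
      rcases le_or_gt (r₀ * (1 / 2) ^ k) (qsS n x) with h | h
      · refine le_trans ?_ (ih x hx h)
        have : θ ^ (k + 1) ≤ θ ^ k := by rw [hθs]; nlinarith
        gcongr
      · set r := r₀ * (1 / 2 : ℝ) ^ k with hr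
        have hr0 : 0 < r := by positivity
        have hrr₀ : r ≤ r₀ := by
          have : (1 / 2 : ℝ) ^ k ≤ 1 := pow_le_one₀ (by norm_num) (by norm_num)
          rw [hr]; nlinarith
        have hrβ : r ^ β = r₀ ^ β * θ ^ k := by
          rw [hr, Real.mul_rpow hr₀0.le (by positivity), hθ, ← Real.rpow_natCast,
            ← Real.rpow_natCast, ← Real.rpow_mul (by norm_num), ← Real.rpow_mul (by norm_num),
            mul_comm β]
        have hCr : (C₀ + C₁) * r ^ β ≤ (1 - θ) / 2 * θ ^ k := by
          rw [hrβ, ← mul_assoc]; gcongr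
        have hCr1 : (C₀ + C₁) * r ^ β ≤ 1 := by nlinarith
        have hrp : 0 < r ^ β := by positivity
        have hp0 : 0 < C₀ * r ^ β := by positivity
        have hp1 : 0 < C₁ * r ^ β := by positivity
        obtain ⟨ρ, M, hrρ, hM, h1, h2⟩ := hstep r hr0 (hrr₀.trans hr₀4)
        have hx2 : r / 2 ≤ qsS n x := by
          refine le_trans (le_of_eq ?_) hxr
          rw [hr, pow_succ]; ring
        have h3 := qs_step hn1 hlam hLam hq hK (m := c * r₀ * ((1 + θ ^ k) / 2)) (by positivity)
          hr0 (hrr₀.trans hr₀4) hrρ hp0.le (by linarith) hp1 (by linarith) hM h1 h2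
          hb0 hbK hu hu0 hpde ih hx2 h
        refine le_trans ?_ h3
        have h4 : (1 + θ ^ (k + 1)) ≤ (1 + θ ^ k) * (1 - C₀ * r ^ β - C₁ * r ^ β) := by
          rw [hθs]
          have : (1 + θ ^ k) * ((C₀ + C₁) * r ^ β) ≤ 2 * ((1 - θ) / 2 * θ ^ k) := by
            gcongr; linarith
          linarith
        have h5 : c * r₀ / 2 * qsS n x * (1 + θ ^ (k + 1)) ≤
          c * r₀ / 2 * qsS n x * ((1 + θ ^ k) * (1 - C₀ * r ^ β - C₁ * r ^ β)) := by gcongr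
        linarith
  intro x hx
  have hs0 : 0 < qsS n x := qsS_pos_iff.mpr hx
  obtain ⟨k, hk⟩ := exists_pow_lt_of_lt_one (div_pos hs0 hr₀0) (by norm_num : (1 / 2 : ℝ) < 1)
  rw [lt_div_iff₀ hr₀0] at hk
  have h1 := hmain k x hx (by linarith)
  have hx1 := mem_ball_zero_iff.mp hx
  have h2 : (1 - ‖x‖) / 2 ≤ qsS n x := by unfold qsS; nlinarith [norm_nonneg x]
  have hθk : 0 < θ ^ k := by positivity
  have h3 : c * r₀ / 2 * qsS n x ≤ c * r₀ * ((1 + θ ^ k) / 2) * qsS n x := by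
    have : c * r₀ / 2 * qsS n x * 1 ≤ c * r₀ / 2 * qsS n x * (1 + θ ^ k) := by
      gcongr; linarith
    linarith
  have h4 : c * r₀ / 2 * ((1 - ‖x‖) / 2) ≤ c * r₀ / 2 * qsS n x := by gcongr
  linarith
end
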